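/- arXiv:1811.08386 — 2 statements merged into one kernel-verified Lean document; each statement's English description precedes it below -/
import Mathlib

section
/- Let $I \subseteq S_0 = k[x_0,\ldots,x_{n+e}]$ be a homogeneous ideal such that $S = k[x_e,\ldots,x_{n+e}] \to R = S_0/I$ is a Noether normalization. Then $R$ is Cohen-Macaulay if and only if the initial ideal $\mathrm{in}(I)$ with respect to the degree reverse lexicographic order is minimally generated by a set of monomials in the variables $x_0,\ldots,x_{e-1}$ only. -/
set_option synthInstance.maxHeartbeats 1000000
set_option maxHeartbeats 2000000

noncomputable section

open MvPolynomial

namespace Paper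

variable (k : Type) [Field k]

/-- The degree-`d` graded component of `S₀/I` as a `k`-subspace. -/
def quotComponent {N : ℕ} (I : Ideal (MvPolynomial (Fin N) k)) (d : ℕ) :
    Submodule k (MvPolynomial (Fin N) k ⧸ I) :=
  (MvPolynomial.homogeneousSubmodule (Fin N) k d).map
    (Ideal.Quotient.mkₐ k I).toLinearMap

/-- Hilbert function of `S₀/I`. -/
def hilbFn {N : ℕ} (I : Ideal (MvPolynomial (Fin N) k)) (d : ℕ) : ℕ :=
  Module.finrank k (quotComponent k I d)

/-- `I` is a homogeneous ideal. -/
def IdealHomog {N : ℕ} (I : Ideal (MvPolynomial (Fin N) k)) : Prop :=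
  ∀ f ∈ I, ∀ d : ℕ, MvPolynomial.homogeneousComponent d f ∈ I

/-- `I` is saturated with respect to the irrelevant maximal ideal. -/
def IsSaturatedIdeal {N : ℕ} (I : Ideal (MvPolynomial (Fin N) k)) : Prop :=
  ∀ f : MvPolynomial (Fin N) k, (∀ i : Fin N, MvPolynomial.X i * f ∈ I) → f ∈ I

/-- The subscheme defined by `I` is non-degenerate: `I` contains no nonzero linear form. -/
def Nondegenerate {N : ℕ} (I : Ideal (MvPolynomial (Fin N) k)) : Prop :=
  ∀ f ∈ I, f.IsHomogeneous 1 → f = 0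

/-- `S₀/I` has Hilbert polynomial of degree `n` and multiplicity (degree) `D`. -/
def HasDeg {N : ℕ} (I : Ideal (MvPolynomial (Fin N) k)) (n D : ℕ) : Prop :=
  ∃ P : Polynomial ℚ, P.natDegree = n ∧ (D : ℚ) = P.leadingCoeff * (n.factorial : ℚ) ∧
    ∀ᶠ d : ℕ in Filter.atTop, (hilbFn k I d : ℚ) = Polynomial.eval (d : ℚ) P

/-- The irrelevant maximal ideal of `S₀/I`. -/
def irrelevantIdeal {N : ℕ} (I : Ideal (MvPolynomial (Fin N) k)) :
    Ideal (MvPolynomial (Fin N) k ⧸ I) :=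
  Ideal.span (Set.range fun i : Fin N => Ideal.Quotient.mk I (MvPolynomial.X i))

/-- `S₀/I` is Cohen-Macaulay of dimension `c`: there is a regular sequence of length `c`
in the irrelevant maximal ideal. -/
def IsCMQuot {N : ℕ} (I : Ideal (MvPolynomial (Fin N) k)) (c : ℕ) : Prop :=
  ∃ rs : List (MvPolynomial (Fin N) k ⧸ I), rs.length = c ∧
    (∀ x ∈ rs, x ∈ irrelevantIdeal k I) ∧
    RingTheory.Sequence.IsRegular (MvPolynomial (Fin N) k ⧸ I) rs

/-- The ideal of `R = S₀/I` generated by the images of `x_e, …, x_{N-1}`. -/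
def tailVarsIdeal {N : ℕ} (e : ℕ) (I : Ideal (MvPolynomial (Fin N) k)) :
    Ideal (MvPolynomial (Fin N) k ⧸ I) :=
  Ideal.span {y | ∃ i : Fin N, e ≤ (i : ℕ) ∧ y = Ideal.Quotient.mk I (MvPolynomial.X i)}

/-- The reduction number `r_S(R)` of the Noether normalization by the last variables:
the least `t > 0` with `R_{t+1} = J_{t+1}` for `J = (x_e, …, x_{N-1})R`. -/
def reductionNumber {N : ℕ} (e : ℕ) (I : Ideal (MvPolynomial (Fin N) k)) : ℕ :=
  sInf {t | 0 < t ∧ quotComponent k I (t + 1) ≤ (tailVarsIdeal k e I).restrictScalars k}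

/-- The reduction number `r(R)`: the minimum of `r_J(R₊)` over all minimal reductions `J`
of `R₊`, i.e. ideals generated by `c = dim R` linear forms. -/
def redNumAll {N : ℕ} (I : Ideal (MvPolynomial (Fin N) k)) (c : ℕ) : ℕ :=
  sInf {t | 0 < t ∧ ∃ L : Finset (MvPolynomial (Fin N) k ⧸ I),
    (L : Set (MvPolynomial (Fin N) k ⧸ I)) ⊆ quotComponent k I 1 ∧ L.card = c ∧
    quotComponent k I (t + 1) ≤
      (Ideal.span (L : Set (MvPolynomial (Fin N) k ⧸ I))).restrictScalars k}

/-- The `k`-algebra map `S = k[x_e, …, x_{N-1}] → R = S₀/I`. -/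
def nnMap {N : ℕ} (e : ℕ) (I : Ideal (MvPolynomial (Fin N) k)) :
    MvPolynomial {i : Fin N // e ≤ (i : ℕ)} k →ₐ[k] (MvPolynomial (Fin N) k ⧸ I) :=
  MvPolynomial.aeval fun i => Ideal.Quotient.mk I (MvPolynomial.X i.1)

/-- `S = k[x_e, …, x_{N-1}] → R = S₀/I` is a Noether normalization. -/
def IsNoetherNormalization {N : ℕ} (e : ℕ) (I : Ideal (MvPolynomial (Fin N) k)) : Prop :=
  Function.Injective (nnMap k e I) ∧ (nnMap k e I).toRingHom.Finite

/-- `μ_S(R) = dim_k R/S₊R`, the minimal number of generators of `R` as an `S`-module. -/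
def muS {N : ℕ} (e : ℕ) (I : Ideal (MvPolynomial (Fin N) k)) : ℕ :=
  Module.finrank k ((MvPolynomial (Fin N) k ⧸ I) ⧸ tailVarsIdeal k e I)

/-- total degree of an exponent vector -/
def tdeg {N : ℕ} (a : Fin N →₀ ℕ) : ℕ := a.sum fun _ n => n

/-- degree reverse lexicographic order with `x_0 > x_1 > ⋯ > x_{N-1}`. -/
def drlLt {N : ℕ} (a b : Fin N →₀ ℕ) : Prop :=
  tdeg a < tdeg b ∨
    (tdeg a = tdeg b ∧ ∃ i : Fin N, b i < a i ∧ ∀ j : Fin N, i < j → a j = b j)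

/-- `m` is the leading (largest, w.r.t. degrevlex) exponent of `p`. -/
def IsLeadExp {N : ℕ} (p : MvPolynomial (Fin N) k) (m : Fin N →₀ ℕ) : Prop :=
  m ∈ p.support ∧ ∀ m' ∈ p.support, m' ≠ m → drlLt m' m

/-- The initial ideal of `I` with respect to the degree reverse lexicographic order. -/
def initialIdeal {N : ℕ} (I : Ideal (MvPolynomial (Fin N) k)) :
    Ideal (MvPolynomial (Fin N) k) :=
  Ideal.span {q | ∃ p ∈ I, ∃ m, IsLeadExp k p m ∧ q = MvPolynomial.monomial m 1}

/-- `p` is homogeneous of degree `d ∈ ℤ` (`0` if `d < 0`). -/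
def HomogOfDeg {σ : Type} (p : MvPolynomial σ k) (d : ℤ) : Prop :=
  p = 0 ∨ ∃ m : ℕ, (m : ℤ) = d ∧ p.IsHomogeneous m

/-- A minimal graded free resolution of the graded module `M` (with grading `Mdeg`) over
`A = k[σ]`, recording the graded Betti numbers `β i j = dim_k Tor_i^A(M,k)_{i+j}`:
the `i`-th free module has `β i j` generators in internal degree `i + j`. -/
structure MinGradedFreeRes (σ : Type) (M : Type) [AddCommGroup M]
    [Module (MvPolynomial σ k) M] [Module k M] (Mdeg : ℤ → Submodule k M) where
  β : ℕ → ℤ → ℕ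
  rowFinite : ∀ i, (Function.support (β i)).Finite
  d : ∀ i : ℕ, (((j : ℤ) × Fin (β (i + 1) j)) →₀ MvPolynomial σ k) →ₗ[MvPolynomial σ k]
      ((j : ℤ) × Fin (β i j)) →₀ MvPolynomial σ k
  ε : (((j : ℤ) × Fin (β 0 j)) →₀ MvPolynomial σ k) →ₗ[MvPolynomial σ k] M
  graded : ∀ (i : ℕ) (j j' : ℤ) (s : Fin (β (i + 1) j)) (s' : Fin (β i j')),
      HomogOfDeg k (d i (Finsupp.single ⟨j, s⟩ 1) ⟨j', s'⟩) (j + 1 - j')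
  minimal : ∀ (i : ℕ) (j j' : ℤ) (s : Fin (β (i + 1) j)) (s' : Fin (β i j')),
      j' = j + 1 → d i (Finsupp.single ⟨j, s⟩ 1) ⟨j', s'⟩ = 0
  eps_graded : ∀ (j : ℤ) (s : Fin (β 0 j)), ε (Finsupp.single ⟨j, s⟩ 1) ∈ Mdeg j
  eps_surj : Function.Surjective ε
  exact0 : Function.Exact (d 0) ε
  exactSeq : ∀ i : ℕ, Function.Exact (d (i + 1)) (d i)

/-- `Mdeg` is a grading of the `k[σ]`-module `M`. -/
def IsGrading (σ : Type) (M : Type) [AddCommGroup M]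
    [Module (MvPolynomial σ k) M] [Module k M] (Mdeg : ℤ → Submodule k M) : Prop :=
  (⨆ d, Mdeg d) = ⊤ ∧ iSupIndep Mdeg ∧
    ∀ (i : σ) (d : ℤ), ∀ x ∈ Mdeg d, (MvPolynomial.X i : MvPolynomial σ k) • x ∈ Mdeg (d + 1)

/-- The standard grading on `S₀/I` (indexed by `ℤ`). -/
def quotDeg {N : ℕ} (I : Ideal (MvPolynomial (Fin N) k)) (d : ℤ) :
    Submodule k (MvPolynomial (Fin N) k ⧸ I) :=
  if 0 ≤ d then quotComponent k I d.toNat else ⊥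

/-- The standard grading on a homogeneous ideal `I ⊆ S₀` (indexed by `ℤ`). -/
def idealDeg {N : ℕ} (I : Ideal (MvPolynomial (Fin N) k)) (d : ℤ) :
    Submodule k ↥I :=
  if 0 ≤ d then
    Submodule.comap ((I.subtype).restrictScalars k)
      (MvPolynomial.homogeneousSubmodule (Fin N) k d.toNat)
  else ⊥

/-- `χ_m = Σ_{j=0}^m (-1)^j β_{m-j,j}`. -/
def chiOf (β : ℕ → ℤ → ℕ) (m : ℤ) : ℤ :=
  if m < 0 then 0
  else ∑ j ∈ Finset.range (m.toNat + 1), (-1 : ℤ) ^ j * (β (m.toNat - j) (j : ℤ) : ℤ)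

/-- projective dimension read off from a minimal resolution's Betti table -/
def pdOf (β : ℕ → ℤ → ℕ) : ℕ∞ :=
  ⨆ i : {i : ℕ // ∃ j, β i j ≠ 0}, ((i : ℕ) : ℕ∞)

/-- index type of the variables `x_t, …, x_{N-1}` -/
def tailIdx (N t : ℕ) := {i : Fin N // t ≤ (i : ℕ)}


/-- The `S = k[x_e,…,x_{N-1}]`-module structure on `R = S₀/I` via `nnMap`. -/
def nnModule {N : ℕ} (e : ℕ) (I : Ideal (MvPolynomial (Fin N) k)) :
    Module (MvPolynomial {i : Fin N // e ≤ (i : ℕ)} k) (MvPolynomial (Fin N) k ⧸ I) :=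
  Module.compHom _ (nnMap k e I).toRingHom

/-- The underlying set of the `S`-submodule of `R = S₀/I` spanned by `s`. -/
def nnSpan {N : ℕ} (e : ℕ) (I : Ideal (MvPolynomial (Fin N) k))
    (s : Set (MvPolynomial (Fin N) k ⧸ I)) : Set (MvPolynomial (Fin N) k ⧸ I) :=
  letI := nnModule k e I
  (Submodule.span (MvPolynomial {i : Fin N // e ≤ (i : ℕ)} k) s : Set _)

/-- The truncated ideal `(I)_{≥ r+1}`, generated by the homogeneous elements of `I`
of degree at least `r + 1`. -/
def truncIdeal {N : ℕ} (I : Ideal (MvPolynomial (Fin N) k)) (r : ℕ) :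
    Ideal (MvPolynomial (Fin N) k) :=
  Ideal.span {f | f ∈ I ∧ ∃ d : ℕ, r + 1 ≤ d ∧ f.IsHomogeneous d}

end Paper

end


namespace BG

section localAlg
open RingTheory.Sequence IsLocalRing Pointwise CategoryTheory Abelian Limits

/-- Dimension is bounded by the number of parameters. -/
lemma supportDim_le_length {A : Type} [CommRing A] [IsNoetherianRing A] [IsLocalRing A]
    (rs : List A) : ∀ (N : Type) [AddCommGroup N] [Module A N] [Module.Finite A N],
    (∀ r ∈ rs, r ∈ maximalIdeal A) →
    (∀ p ∈ Module.support A N, (∀ r ∈ rs, r ∈ p.asIdeal) → p.asIdeal = maximalIdeal A) →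
    Module.supportDim A N ≤ rs.length := by
  induction rs with
  | nil =>
    intro N _ _ _ _ h
    have : Subsingleton (Module.support A N) := ⟨fun p q => by
      apply Subtype.ext
      apply PrimeSpectrum.ext
      rw [h p.1 p.2 (by simp), h q.1 q.2 (by simp)]⟩
    simpa [Module.supportDim] using Order.krullDim_nonpos_of_subsingleton
  | cons y rs ih =>
    intro N _ _ _ hm h
    have h1 := Module.supportDim_le_supportDim_quotSMulTop_succ (M := N) (hm y (by simp))
    have h2 := ih (QuotSMulTop y N) (fun r hr => hm r (by simp [hr])) (by
      intro p hp hr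
      rw [Module.support_quotSMulTop] at hp
      apply h p hp.1
      intro r hr'
      rcases List.mem_cons.1 hr' with rfl | hr'
      · simpa [PrimeSpectrum.mem_zeroLocus] using hp.2
      · exact hr r hr')
    refine h1.trans ?_
    push_cast [List.length_cons]
    gcongr

/-- Unmixedness: nonzero submodules have dimension at least the depth. -/
lemma length_le_supportDim {A : Type} [CommRing A] [IsNoetherianRing A] [IsLocalRing A]
    (rs : List A) : ∀ (M : Type) [AddCommGroup M] [Module A M] [Module.Finite A M],
    (∀ r ∈ rs, r ∈ maximalIdeal A) → IsWeaklyRegular M rs → ∀ N : Submodule A M, N ≠ ⊥ →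
    (rs.length : WithBot ℕ∞) ≤ Module.supportDim A N := by
  induction rs with
  | nil =>
    intro M _ _ _ _ _ N hN
    have : Nontrivial N := (Submodule.nontrivial_iff_ne_bot).2 hN
    have : Nonempty (Module.support A N) := Module.nonempty_support_of_nontrivial.to_subtype
    simpa [Module.supportDim] using Order.krullDim_nonneg
  | cons a rs ih =>
    intro M _ _ _ hm hreg N hN
    rw [isWeaklyRegular_cons_iff] at hreg
    obtain ⟨ha, hreg⟩ := hreg
    have ham := hm a (by simp)
    -- saturation
    let F : ℕ →o Submodule A M :=
      ⟨fun s => N.comap (LinearMap.lsmul A M (a ^ s)), by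
        refine monotone_nat_of_le_succ fun s x hx => ?_
        simp only [Submodule.mem_comap, LinearMap.lsmul_apply] at hx ⊢
        rw [pow_succ', mul_smul]
        exact N.smul_mem _ hx⟩
    obtain ⟨s, hs⟩ := monotone_stabilizes_iff_noetherian.2 (inferInstance : IsNoetherian A M) F
    let N' := F s
    have hsat : ∀ x, a • x ∈ N' → x ∈ N' := by
      intro x hx
      have : x ∈ F (s+1) := by
        simp only [N', F, OrderHom.coe_mk, Submodule.mem_comap, LinearMap.lsmul_apply] at hx ⊢
        rwa [pow_succ, mul_smul]
      rw [← hs (s+1) (by omega)] at this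
      exact this
    have hNN' : N ≤ N' := by
      have h0 : F 0 = N := by ext x; simp [F]
      rw [← h0]; exact F.monotone (Nat.zero_le s)
    have hN' : N' ≠ ⊥ := fun h => hN (le_bot_iff.1 (h ▸ hNN'))
    -- N' embeds in N
    have d1 : Module.supportDim A N' ≤ Module.supportDim A N := by
      let f : N' →ₗ[A] N := ((LinearMap.lsmul A M (a ^ s)).comp N'.subtype).codRestrict N (by
        intro x; exact x.2)
      apply Module.supportDim_le_of_injective f
      intro x y hxy
      apply Subtype.ext
      apply ha.pow s
      exact congrArg Subtype.val hxy
    have haN' : IsSMulRegular N' a := ha.submodule N' a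
    have d2 := Module.supportDim_quotSMulTop_succ_eq_supportDim haN' ham
    let K : Submodule A (QuotSMulTop a M) := N'.map (Submodule.mkQ _)
    have hK : K ≠ ⊥ := by
      intro hK
      apply hN'
      apply Submodule.eq_bot_of_le_smul_of_le_jacobson_bot (Ideal.span {a}) N'
        (IsNoetherian.noetherian _)
      · intro x hx
        have hx0 : Submodule.mkQ (a • (⊤ : Submodule A M)) x = 0 := by
          have : Submodule.mkQ (a • (⊤ : Submodule A M)) x ∈ K := Submodule.mem_map_of_mem hx
          rw [hK] at this
          simpa using this
        rw [Submodule.mkQ_apply, Submodule.Quotient.mk_eq_zero] at hx0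
        obtain ⟨z, -, rfl⟩ := (Submodule.mem_smul_pointwise_iff_exists _ _ _).1 hx0
        exact Submodule.smul_mem_smul (Ideal.mem_span_singleton_self a) (hsat z hx)
      · rw [Ideal.span_singleton_le_iff_mem]
        exact maximalIdeal_le_jacobson _ ham
    have d3 := ih (QuotSMulTop a M) (fun r hr => hm r (by simp [hr])) hreg K hK
    have d4 : Module.supportDim A K ≤ Module.supportDim A (QuotSMulTop a N') := by
      let g : N' →ₗ[A] K := ((Submodule.mkQ (a • (⊤ : Submodule A M))).comp N'.subtype).codRestrict K
        (fun x => Submodule.mem_map_of_mem x.2)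
      have hg : a • (⊤ : Submodule A N') ≤ LinearMap.ker g := by
        intro x hx
        obtain ⟨z, -, rfl⟩ := (Submodule.mem_smul_pointwise_iff_exists _ _ _).1 hx
        rw [LinearMap.mem_ker]
        apply Subtype.ext
        simp only [g, LinearMap.codRestrict_apply, LinearMap.comp_apply, Submodule.subtype_apply,
          Submodule.mkQ_apply, ZeroMemClass.coe_zero]
        rw [Submodule.Quotient.mk_eq_zero]
        exact Submodule.smul_mem_pointwise_smul _ _ _ trivial
      apply Module.supportDim_le_of_surjective (Submodule.liftQ _ g hg)
      rintro ⟨x, hx⟩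
      obtain ⟨z, hz, rfl⟩ := hx
      exact ⟨Submodule.Quotient.mk ⟨z, hz⟩, by
        apply Subtype.ext
        simp [g]⟩
    refine le_trans ?_ d1
    rw [← d2]
    push_cast [List.length_cons]
    gcongr
    exact d3.trans d4

/-- Depth drops by one modulo a regular element (Rees). -/
lemma exists_regular_quot {A : Type} [CommRing A] [IsNoetherianRing A] [IsLocalRing A]
    (M : Type) [AddCommGroup M] [Module A M] [Module.Finite A M] (n : ℕ)
    (h : ∃ rs : List A, rs.length = n + 1 ∧ (∀ r ∈ rs, r ∈ maximalIdeal A) ∧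
      RingTheory.Sequence.IsRegular M rs)
    (b : A) (hb : b ∈ maximalIdeal A) (hbM : IsSMulRegular M b) :
    ∃ rs : List A, rs.length = n ∧ (∀ r ∈ rs, r ∈ maximalIdeal A) ∧
      RingTheory.Sequence.IsRegular (QuotSMulTop b M) rs := by
  have hM : Nontrivial M := by
    obtain ⟨rs, -, -, h⟩ := h
    exact h.nontrivial
  have hlt : ∀ (P : Type) [AddCommGroup P] [Module A P] [Module.Finite A P] [Nontrivial P],
      maximalIdeal A • (⊤ : Submodule A P) < ⊤ := by
    intro P _ _ _ _
    refine lt_top_iff_ne_top.2 fun hP => ?_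
    have := Submodule.eq_bot_of_le_smul_of_le_jacobson_bot (maximalIdeal A) (⊤ : Submodule A P)
      Module.Finite.fg_top hP.ge (maximalIdeal_le_jacobson _)
    exact top_ne_bot this
  have hntr : Nontrivial (QuotSMulTop b M) := by
    exact nontrivial_quotSMulTop_of_mem_maximalIdeal M hb
  have t1 := (ModuleCat.exists_isRegular_tfae (maximalIdeal A) (n+1) (ModuleCat.of A M) (hlt M)).out 3 1
  have t2 := (ModuleCat.exists_isRegular_tfae (maximalIdeal A) n
    (ModuleCat.of A (QuotSMulTop b M)) (hlt _)).out 1 3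
  apply t2.1
  have h_ext := t1.1 h
  intro i hi
  have zero1 := AddCommGrpCat.isZero_of_iff_subsingleton.mpr (h_ext i (by omega))
  have zero2 := AddCommGrpCat.isZero_of_iff_subsingleton.mpr (h_ext (i + 1) (by omega))
  exact AddCommGrpCat.subsingleton_of_isZero <| ShortComplex.Exact.isZero_of_both_zeros
    ((Ext.covariant_sequence_exact₃' _
      (IsSMulRegular.smulShortComplex_shortExact (M := ModuleCat.of A M) hbM)) i (i + 1) rfl)
    (zero1.eq_zero_of_src _) (zero2.eq_zero_of_tgt _)

/-- Over a Noetherian local ring, a system of parameters on a Cohen-Macaulay module is regular. -/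
theorem params_regular {A : Type} [CommRing A] [IsNoetherianRing A] [IsLocalRing A]
    (ys : List A) : ∀ (M : Type) [AddCommGroup M] [Module A M] [Module.Finite A M],
    (∃ rs : List A, rs.length = ys.length ∧ (∀ r ∈ rs, r ∈ maximalIdeal A) ∧
      RingTheory.Sequence.IsRegular M rs) →
    (∀ r ∈ ys, r ∈ maximalIdeal A) →
    (∀ p ∈ Module.support A M, (∀ r ∈ ys, r ∈ p.asIdeal) → p.asIdeal = maximalIdeal A) →
    IsWeaklyRegular M ys := by
  induction ys with
  | nil => intro M _ _ _ _ _ _; simp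
  | cons y ys ih =>
    intro M _ _ _ hreg hm hp
    have hy := hm y (by simp)
    have hyM : IsSMulRegular M y := by
      rw [isSMulRegular_iff_ker_lsmul_eq_bot]
      by_contra hN
      obtain ⟨rs, hl, hrm, hr⟩ := hreg
      have h1 := length_le_supportDim rs M hrm hr.toIsWeaklyRegular _ hN
      have h2 := supportDim_le_length ys (LinearMap.ker (LinearMap.lsmul A M y))
        (fun r hr => hm r (by simp [hr])) (by
          intro p hpN hr
          apply hp p (Module.support_subset_of_injective _ (Submodule.injective_subtype _) hpN)
          intro r hr'
          rcases List.mem_cons.1 hr' with rfl | hr'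
          · rw [Module.mem_support_iff_of_finite] at hpN
            apply hpN
            rw [Module.mem_annihilator]
            rintro ⟨x, hx⟩
            apply Subtype.ext
            simpa using hx
          · exact hr r hr')
      rw [hl] at h1
      have h3 := h1.trans h2
      simp only [List.length_cons] at h3
      have : ys.length + 1 ≤ ys.length := by exact_mod_cast h3
      omega
    rw [isWeaklyRegular_cons_iff]
    refine ⟨hyM, ih (QuotSMulTop y M) (exists_regular_quot M ys.length hreg y hy hyM)
      (fun r hr => hm r (by simp [hr])) ?_⟩
    intro p hpM hr
    rw [Module.support_quotSMulTop] at hpM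
    apply hp p hpM.1
    intro r hr'
    rcases List.mem_cons.1 hr' with rfl | hr'
    · simpa [PrimeSpectrum.mem_zeroLocus] using hpM.2
    · exact hr r hr'

end localAlg

section monomials
open MvPolynomial Paper

variable {N : ℕ}

lemma tdeg_add (a b : Fin N →₀ ℕ) : tdeg (a + b) = tdeg a + tdeg b := by
  unfold tdeg
  exact Finsupp.sum_add_index' (fun _ => rfl) (fun _ _ _ => rfl)

lemma le_tdeg (a : Fin N →₀ ℕ) (i : Fin N) : a i ≤ tdeg a := by
  unfold tdeg
  by_cases h : i ∈ a.support
  · exact Finset.single_le_sum (f := fun i => a i) (fun _ _ => Nat.zero_le _) h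
  · simp at h; omega

lemma drl_irrefl (a : Fin N →₀ ℕ) : ¬ drlLt a a := by
  rintro (h | ⟨-, i, h, -⟩) <;> omega

lemma drl_trans {a b c : Fin N →₀ ℕ} (h1 : drlLt a b) (h2 : drlLt b c) : drlLt a c := by
  rcases h1 with h1 | ⟨h1, i, hi, hi'⟩ <;> rcases h2 with h2 | ⟨h2, j, hj, hj'⟩
  · left; omega
  · left; omega
  · left; omega
  · right
    refine ⟨by omega, ?_⟩
    rcases lt_trichotomy i j with h | rfl | h
    · exact ⟨j, by rw [hi' j h]; exact hj, fun l hl => by rw [hi' l (h.trans hl), hj' l hl]⟩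
    · exact ⟨i, by omega, fun l hl => by rw [hi' l hl, hj' l hl]⟩
    · exact ⟨i, by rw [← hj' i h]; exact hi, fun l hl => by rw [hi' l hl, hj' l (h.trans hl)]⟩

lemma drl_total {a b : Fin N →₀ ℕ} (h : a ≠ b) : drlLt a b ∨ drlLt b a := by
  rcases lt_trichotomy (tdeg a) (tdeg b) with hd | hd | hd
  · exact Or.inl (Or.inl hd)
  · have hne : (Finset.univ.filter fun i => a i ≠ b i).Nonempty := by
      by_contra hc
      rw [Finset.not_nonempty_iff_eq_empty, Finset.filter_eq_empty_iff] at hc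
      exact h (Finsupp.ext fun i => by simpa using hc (Finset.mem_univ i))
    let i := (Finset.univ.filter fun i => a i ≠ b i).max' hne
    have hi : a i ≠ b i := (Finset.mem_filter.1 (Finset.max'_mem _ hne)).2
    have hi' : ∀ j, i < j → a j = b j := by
      intro j hj
      by_contra hc
      exact absurd (Finset.le_max' (Finset.univ.filter fun i => a i ≠ b i) j (by simp [hc]))
        (not_le.2 hj)
    rcases lt_or_gt_of_ne hi with hlt | hlt
    · exact Or.inr (Or.inr ⟨hd.symm, i, hlt, fun j hj => (hi' j hj).symm⟩)
    · exact Or.inl (Or.inr ⟨hd, i, hlt, hi'⟩)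
  · exact Or.inr (Or.inl hd)

lemma drl_add_right {a b : Fin N →₀ ℕ} (c : Fin N →₀ ℕ) :
    drlLt (a + c) (b + c) ↔ drlLt a b := by
  unfold drlLt
  simp only [tdeg_add, Finsupp.add_apply]
  constructor
  · rintro (h | ⟨h, i, hi, hi'⟩)
    · left; omega
    · exact Or.inr ⟨by omega, i, by omega, fun j hj => by have := hi' j hj; omega⟩
  · rintro (h | ⟨h, i, hi, hi'⟩)
    · left; omega
    · exact Or.inr ⟨by omega, i, by omega, fun j hj => by have := hi' j hj; omega⟩

lemma drl_wf : WellFounded (drlLt (N := N)) := by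
  let f : (Fin N →₀ ℕ) → ℕ × (Fin N → ℕ) := fun a => (tdeg a, fun i => tdeg a - a i)
  have hwf : WellFounded (Prod.Lex (fun x y : ℕ => x < y)
      (Pi.Lex (fun i j : Fin N => j < i) fun {_} (x y : ℕ) => x < y)) :=
    WellFounded.prod_lex wellFounded_lt
      (Pi.Lex.wellFounded (fun i j : Fin N => j < i) (fun _ => wellFounded_lt))
  refine Subrelation.wf (h₁ := fun {a b} h => ?_) (InvImage.wf f hwf)
  rcases h with h | ⟨h, i, hi, hi'⟩
  · exact Prod.Lex.left _ _ h
  · show Prod.Lex _ _ (tdeg a, _) (tdeg b, _)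
    rw [h]
    refine Prod.Lex.right _ ⟨i, fun j hj => ?_, ?_⟩
    · simp only; rw [hi' j hj]
    · have := le_tdeg a i
      simp only; omega

/-- maximal element of a finite nonempty set of exponents -/
lemma exists_drl_max (s : Finset (Fin N →₀ ℕ)) (hs : s.Nonempty) :
    ∃ m ∈ s, ∀ m' ∈ s, m' ≠ m → drlLt m' m := by
  induction hs using Finset.Nonempty.cons_induction with
  | singleton a => exact ⟨a, by simp, by simp⟩
  | cons a s ha hs ih =>
    obtain ⟨m, hm, hmax⟩ := ih
    have hne : a ≠ m := fun h => ha (h ▸ hm)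
    rcases drl_total hne with h | h
    · refine ⟨m, by simp [hm], fun m' hm' hne' => ?_⟩
      rcases Finset.mem_cons.1 hm' with rfl | hm'
      · exact h
      · exact hmax m' hm' hne'
    · refine ⟨a, by simp, fun m' hm' hne' => ?_⟩
      rcases Finset.mem_cons.1 hm' with rfl | hm'
      · exact absurd rfl hne'
      · by_cases h' : m' = m
        · exact h' ▸ h
        · exact drl_trans (hmax m' hm' h') h

variable {k : Type} [Field k]

lemma exists_leadExp (p : MvPolynomial (Fin N) k) (hp : p ≠ 0) : ∃ m, IsLeadExp k p m := by
  obtain ⟨m, hm, h⟩ := exists_drl_max p.support (Finset.nonempty_iff_ne_empty.2 (by simpa using hp))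
  exact ⟨m, hm, h⟩

/-- multiples of elements of `I` show the lead exponents are upward closed. -/
lemma leadExp_mul {I : Ideal (MvPolynomial (Fin N) k)} {p : MvPolynomial (Fin N) k}
    (hp : p ∈ I) {m : Fin N →₀ ℕ} (hm : IsLeadExp k p m) (c : Fin N →₀ ℕ) :
    IsLeadExp k (p * monomial c 1) (m + c) := by
  constructor
  · rw [mem_support_iff, coeff_mul_monomial]
    simpa using hm.1
  · intro m' hm' hne
    rw [mem_support_iff, coeff_mul_monomial'] at hm'
    split_ifs at hm' with hc
    · obtain ⟨d, rfl⟩ := exists_add_of_le hc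
      rw [add_comm c d] at hne hm' ⊢
      rw [drl_add_right]
      refine hm.2 d ?_ (fun h => hne (by rw [h]))
      rw [mem_support_iff]
      simpa using hm'
    · exact absurd rfl hm'

/-- The set of lead exponents of elements of `I`. -/
def LE (I : Ideal (MvPolynomial (Fin N) k)) : Set (Fin N →₀ ℕ) :=
  {m | ∃ p ∈ I, IsLeadExp k p m}

lemma initialIdeal_eq (I : Ideal (MvPolynomial (Fin N) k)) :
    initialIdeal k I = Ideal.span ((fun m => monomial m (1 : k)) '' LE I) := by
  unfold initialIdeal
  congr 1
  ext q
  constructor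
  · rintro ⟨p, hp, m, hm, rfl⟩
    exact ⟨m, ⟨p, hp, hm⟩, rfl⟩
  · rintro ⟨m, ⟨p, hp, hm⟩, rfl⟩
    exact ⟨p, hp, m, hm, rfl⟩

lemma LE_up {I : Ideal (MvPolynomial (Fin N) k)} {m m' : Fin N →₀ ℕ} (hm : m ∈ LE I)
    (h : m ≤ m') : m' ∈ LE I := by
  obtain ⟨c, rfl⟩ := exists_add_of_le h
  obtain ⟨p, hp, hpm⟩ := hm
  exact ⟨p * monomial c 1, I.mul_mem_right _ hp, leadExp_mul hp hpm c⟩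

lemma mem_span_mono (G : Set (Fin N →₀ ℕ)) (m : Fin N →₀ ℕ) :
    monomial m (1 : k) ∈ Ideal.span ((fun m => monomial m (1 : k)) '' G) ↔ ∃ g ∈ G, g ≤ m := by
  classical
  rw [mem_ideal_span_monomial_image]
  simp [support_monomial]

lemma mem_LE_iff (I : Ideal (MvPolynomial (Fin N) k)) (m : Fin N →₀ ℕ) :
    monomial m (1 : k) ∈ initialIdeal k I ↔ m ∈ LE I := by
  rw [initialIdeal_eq, mem_span_mono]
  exact ⟨fun ⟨g, hg, h⟩ => LE_up hg h, fun h => ⟨m, h, le_rfl⟩⟩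

/-- Normal forms. -/
lemma exists_nf (I : Ideal (MvPolynomial (Fin N) k)) (f : MvPolynomial (Fin N) k) :
    ∃ r : MvPolynomial (Fin N) k, f - r ∈ I ∧ ∀ m ∈ r.support, m ∉ LE I := by
  -- it is enough to treat monomials
  have key : ∀ m : Fin N →₀ ℕ, ∃ r : MvPolynomial (Fin N) k, monomial m 1 - r ∈ I ∧
      ∀ m ∈ r.support, m ∉ LE I := by
    have sums : ∀ (s : Finset (Fin N →₀ ℕ)) (c : (Fin N →₀ ℕ) → k),
        (∀ m ∈ s, ∃ r : MvPolynomial (Fin N) k, monomial m 1 - r ∈ I ∧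
          ∀ m ∈ r.support, m ∉ LE I) →
        ∃ r : MvPolynomial (Fin N) k, (∑ m ∈ s, c m • monomial m 1) - r ∈ I ∧
          ∀ m ∈ r.support, m ∉ LE I := by
      classical
      intro s c
      induction s using Finset.induction_on with
      | empty => intro _; exact ⟨0, by simp, by simp⟩
      | insert a s ha ih =>
        intro h
        obtain ⟨r1, h1, h1'⟩ := h a (by simp)
        obtain ⟨r2, h2, h2'⟩ := ih fun m hm => h m (by simp [hm])
        refine ⟨c a • r1 + r2, ?_, ?_⟩
        · rw [Finset.sum_insert ha]
          have : c a • monomial a (1 : k) + ∑ m ∈ s, c m • monomial m (1 : k) - (c a • r1 + r2)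
            = c a • (monomial a (1 : k) - r1) + (∑ m ∈ s, c m • monomial m (1 : k) - r2) := by
            rw [smul_sub]; ring
          rw [this]
          exact I.add_mem (Submodule.smul_of_tower_mem I _ h1) h2
        · intro m hm
          rcases Finset.mem_union.1 (support_add hm) with h | h
          · exact h1' m (support_smul h)
          · exact h2' m h
    intro m
    induction m using drl_wf.induction with
    | _ m ih =>
      by_cases hm : m ∈ LE I
      · obtain ⟨p, hp, hpm⟩ := hm
        have hc : coeff m p ≠ 0 := mem_support_iff.1 hpm.1
        obtain ⟨r, hr, hr'⟩ := sums (p.support.erase m) (fun m' => -(coeff m p)⁻¹ * coeff m' p)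
          (fun m' hm' => ih m' (hpm.2 m' (Finset.mem_of_mem_erase hm') (Finset.ne_of_mem_erase hm')))
        refine ⟨r, ?_, hr'⟩
        have e1 : p = monomial m (coeff m p) + ∑ m' ∈ p.support.erase m, monomial m' (coeff m' p) := by
          rw [Finset.add_sum_erase _ (fun m' => monomial m' (coeff m' p)) hpm.1]
          exact p.as_sum
        have e2 : monomial m (1 : k) = (coeff m p)⁻¹ • p +
            ∑ m' ∈ p.support.erase m, (-(coeff m p)⁻¹ * coeff m' p) • monomial m' (1 : k) := by
          conv_lhs => rw [← inv_mul_cancel₀ hc]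
          have : (coeff m p)⁻¹ • p = (coeff m p)⁻¹ • monomial m (coeff m p) +
            ∑ m' ∈ p.support.erase m, (coeff m p)⁻¹ • monomial m' (coeff m' p) := by
            generalize (coeff m p)⁻¹ = c
            conv_lhs => rw [e1]
            rw [smul_add, Finset.smul_sum]
          rw [this, add_assoc, ← Finset.sum_add_distrib, Finset.sum_eq_zero, add_zero]
          · simp [smul_monomial]
          · intro x _
            simp [smul_monomial]
        rw [e2, add_sub_assoc]
        exact I.add_mem (Submodule.smul_of_tower_mem I _ hp) hr
      · exact ⟨monomial m 1, by simp, by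
          classical
          intro m' hm'
          simp [support_monomial] at hm'
          rwa [hm']⟩
  -- assemble
  induction f using MvPolynomial.induction_on' with
  | monomial m a =>
    obtain ⟨r, h1, h2⟩ := key m
    refine ⟨a • r, ?_, fun m' hm' => h2 m' (support_smul hm')⟩
    have : monomial m a - a • r = a • (monomial m (1:k) - r) := by
      rw [smul_sub, smul_monomial]; simp
    rw [this]
    exact Submodule.smul_of_tower_mem I _ h1
  | add p q hp hq =>
    obtain ⟨r1, h1, h1'⟩ := hp
    obtain ⟨r2, h2, h2'⟩ := hq
    classical
    refine ⟨r1 + r2, ?_, ?_⟩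
    · have : p + q - (r1 + r2) = (p - r1) + (q - r2) := by ring
      rw [this]; exact I.add_mem h1 h2
    · intro m hm
      rcases Finset.mem_union.1 (support_add hm) with h | h
      · exact h1' m h
      · exact h2' m h

end monomials

section conv
open RingTheory.Sequence MvPolynomial Paper

/-- the sequence `z_{n+e}, …, z_e`. -/
def ysList {B : Type} (n e : ℕ) (z : Fin (n + e + 1) → B) : List B :=
  List.ofFn (fun t : Fin (n + 1) => z ⟨n + e - t, by omega⟩)

lemma ysList_length {B : Type} (n e : ℕ) (z : Fin (n + e + 1) → B) :
    (ysList n e z).length = n + 1 := by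
  simp [ysList]

lemma ysList_get {B : Type} (n e : ℕ) (z : Fin (n + e + 1) → B) (i : ℕ)
    (h : i < (ysList n e z).length) : (ysList n e z)[i] = z ⟨n + e - i, by omega⟩ := by
  simp only [ysList, List.getElem_ofFn]

lemma mem_ysList {B : Type} (n e : ℕ) (z : Fin (n + e + 1) → B) (b : B) :
    b ∈ ysList n e z ↔ ∃ i : Fin (n + e + 1), e ≤ (i : ℕ) ∧ b = z i := by
  unfold ysList
  rw [List.mem_ofFn']
  constructor
  · rintro ⟨t, rfl⟩
    exact ⟨⟨n + e - t, by omega⟩, by simp; omega, rfl⟩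
  · rintro ⟨i, hi, rfl⟩
    refine ⟨⟨n + e - i, by omega⟩, ?_⟩
    simp only
    congr 1
    ext
    simp only
    omega

lemma ysList_take {B : Type} [CommRing B] (n e : ℕ) (z : Fin (n + e + 1) → B)
    (t : ℕ) (ht : t < n + 1) :
    {r | r ∈ (ysList n e z).take t} = z '' {l | (⟨n + e - t, by omega⟩ : Fin (n + e + 1)) < l} := by
  ext b
  simp only [Set.mem_ofPred_eq, Set.mem_image]
  rw [List.mem_take_iff_getElem]
  constructor
  · rintro ⟨s, hs, rfl⟩
    rw [ysList_length] at hs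
    refine ⟨⟨n + e - s, by omega⟩, ?_, ?_⟩
    · rw [Fin.lt_def]; simp only; omega
    · simp only [ysList, List.getElem_ofFn]
  · rintro ⟨l, hl, rfl⟩
    rw [Fin.lt_def] at hl
    simp only at hl
    refine ⟨n + e - l, ?_, ?_⟩
    · rw [ysList_length]; omega
    · simp only [ysList, List.getElem_ofFn]
      congr 1
      ext
      simp only
      omega

lemma weaklyRegular_ysList {B : Type} [CommRing B] (n e : ℕ) (z : Fin (n + e + 1) → B) :
    IsWeaklyRegular B (ysList n e z) ↔ ∀ j : Fin (n + e + 1), e ≤ (j : ℕ) → ∀ b : B,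
      z j * b ∈ Ideal.span (z '' {l | j < l}) → b ∈ Ideal.span (z '' {l | j < l}) := by
  rw [isWeaklyRegular_iff_Fin]
  constructor
  · intro h j hj b hb
    have h1 := h ⟨n + e - j, by rw [ysList_length]; omega⟩
    rw [isSMulRegular_quotient_iff_mem_of_smul_mem] at h1
    have hj2 : (⟨n + e - (n + e - (j : ℕ)), by omega⟩ : Fin (n + e + 1)) = j := by
      ext; simp only; omega
    have h2 := h1 b
    simp only [smul_eq_mul, Ideal.mul_top] at h2
    rw [Ideal.ofList, ysList_take n e z _ (by omega), hj2] at h2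
    apply h2
    convert hb using 2
    simp only [ysList, Fin.getElem_fin, List.getElem_ofFn]
    congr 1
  · intro h i
    have hi : (i : ℕ) < n + 1 := lt_of_lt_of_eq i.2 (ysList_length n e z)
    rw [isSMulRegular_quotient_iff_mem_of_smul_mem]
    intro b
    simp only [smul_eq_mul, Ideal.mul_top]
    rw [Ideal.ofList, ysList_take n e z _ hi]
    have h1 := h ⟨n + e - i, by omega⟩ (by simp only; omega) b
    intro hb
    apply h1
    convert hb using 2
    exact (ysList_get n e z i i.2).symm

variable {N : ℕ} {k : Type} [Field k]

/-- Standard polynomials in `I` vanish. -/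
lemma std_zero {I : Ideal (MvPolynomial (Fin N) k)} {f : MvPolynomial (Fin N) k} (hf : f ∈ I)
    (h : f ∈ restrictSupport k (LE I)ᶜ) : f = 0 := by
  by_contra h0
  obtain ⟨m, hm⟩ := exists_leadExp f h0
  rw [mem_restrictSupport_iff] at h
  exact h hm.1 ⟨f, hf, hm⟩

lemma std_X_mul {I : Ideal (MvPolynomial (Fin N) k)} {j : Fin N}
    (hj : ∀ m, m + Finsupp.single j 1 ∈ LE I → m ∈ LE I) {r : MvPolynomial (Fin N) k}
    (h : r ∈ restrictSupport k (LE I)ᶜ) : X j * r ∈ restrictSupport k (LE I)ᶜ := by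
  classical
  rw [mem_restrictSupport_iff] at h ⊢
  intro m hm
  rw [support_X_mul] at hm
  simp only [Finset.coe_map, Set.mem_image] at hm
  obtain ⟨m', hm', rfl⟩ := hm
  have := h hm'
  intro hc
  apply this
  apply hj
  simpa [add_comm] using hc

lemma J_nf {I : Ideal (MvPolynomial (Fin N) k)} {j : Fin N}
    (hj : ∀ l, j < l → ∀ m, m + Finsupp.single l 1 ∈ LE I → m ∈ LE I)
    {h : MvPolynomial (Fin N) k} (hh : h ∈ Ideal.span (X '' {l | j < l} : Set (MvPolynomial (Fin N) k))) :
    ∃ s, h - s ∈ I ∧ s ∈ restrictSupport k (LE I)ᶜ ∧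
      s ∈ Ideal.span (X '' {l | j < l} : Set (MvPolynomial (Fin N) k)) := by
  have key : h ∈ I.restrictScalars k ⊔ (restrictSupport k (LE I)ᶜ ⊓
      (Ideal.span (X '' {l | j < l} : Set (MvPolynomial (Fin N) k))).restrictScalars k) := by
    rw [mem_ideal_span_X_image] at hh
    rw [h.as_sum]
    refine Submodule.sum_mem _ fun m hm => ?_
    obtain ⟨l, hl, hml⟩ := hh m hm
    have e1 : monomial m (coeff m h) = X l * monomial (m - Finsupp.single l 1) (coeff m h) := by
      rw [X, monomial_mul, one_mul]
      congr 1
      rw [add_comm, tsub_add_cancel_of_le]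
      simpa [Nat.one_le_iff_ne_zero] using hml
    obtain ⟨r, hr1, hr2⟩ := exists_nf I (monomial (m - Finsupp.single l 1) (coeff m h))
    rw [e1, ← sub_add_cancel (monomial (m - Finsupp.single l 1) (coeff m h)) r, mul_add]
    refine Submodule.add_mem_sup (I.mul_mem_left _ hr1) ⟨?_, ?_⟩
    · exact std_X_mul (hj l hl) (by rw [mem_restrictSupport_iff]; exact fun m hm => hr2 m hm)
    · exact Ideal.mul_mem_right _ _ (Ideal.subset_span ⟨l, hl, rfl⟩)
  obtain ⟨g, hg, s, hs, rfl⟩ := Submodule.mem_sup.1 key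
  exact ⟨s, by simpa using hg, hs.1, hs.2⟩

/-- the main step of the `⇐` direction -/
lemma colon_of_std {I : Ideal (MvPolynomial (Fin N) k)} {j : Fin N}
    (hj : ∀ l, j ≤ l → ∀ m, m + Finsupp.single l 1 ∈ LE I → m ∈ LE I)
    {f : MvPolynomial (Fin N) k}
    (hf : X j * f ∈ I ⊔ Ideal.span (X '' {l | j < l} : Set (MvPolynomial (Fin N) k))) :
    f ∈ I ⊔ Ideal.span (X '' {l | j < l} : Set (MvPolynomial (Fin N) k)) := by
  classical
  obtain ⟨r, hr1, hr2⟩ := exists_nf I f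
  obtain ⟨g, hg, h, hh, e1⟩ := Submodule.mem_sup.1 hf
  obtain ⟨s, hs1, hs2, hs3⟩ := J_nf (fun l hl => hj l hl.le) hh
  have hr : r ∈ restrictSupport k (LE I)ᶜ := by
    rw [mem_restrictSupport_iff]; exact fun m hm => hr2 m hm
  have e2 : X j * r - s = 0 := by
    apply std_zero (I := I)
    · have : X j * r - s = g + (h - s) - X j * (f - r) := by
        rw [mul_sub, ← e1]; ring
      rw [this]
      exact I.sub_mem (I.add_mem hg hs1) (I.mul_mem_left _ hr1)
    · exact Submodule.sub_mem _ (std_X_mul (hj j le_rfl) hr) hs2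
  rw [sub_eq_zero] at e2
  rw [← e2, mem_ideal_span_X_image] at hs3
  have hrJ : r ∈ Ideal.span (X '' {l | j < l} : Set (MvPolynomial (Fin N) k)) := by
    rw [mem_ideal_span_X_image]
    intro m hm
    obtain ⟨l, hl, hml⟩ := hs3 (Finsupp.single j 1 + m) (by
      rw [support_X_mul]; exact Finset.mem_map_of_mem _ hm)
    refine ⟨l, hl, ?_⟩
    rw [Finsupp.add_apply, Finsupp.single_eq_of_ne (ne_of_gt hl), zero_add] at hml
    exact hml
  rw [← sub_add_cancel f r]
  exact Submodule.add_mem_sup hr1 hrJ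

/-- spans in the quotient -/
lemma mk_mem_span (I : Ideal (MvPolynomial (Fin N) k)) (s : Set (Fin N)) (f : MvPolynomial (Fin N) k) :
    Ideal.Quotient.mk I f ∈ Ideal.span ((fun i => Ideal.Quotient.mk I (X i)) '' s) ↔
      f ∈ I ⊔ Ideal.span (X '' s : Set (MvPolynomial (Fin N) k)) := by
  have : Ideal.span ((fun i => Ideal.Quotient.mk I (X i)) '' s) =
      (Ideal.span (X '' s : Set (MvPolynomial (Fin N) k))).map (Ideal.Quotient.mk I) := by
    rw [Ideal.map_span, Set.image_image]
  rw [this, ← Ideal.mem_comap, Ideal.comap_map_of_surjective _ Ideal.Quotient.mk_surjective,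
    ← RingHom.ker_eq_comap_bot, Ideal.mk_ker, sup_comm]

lemma const_zero {I : Ideal (MvPolynomial (Fin N) k)} (hI : IdealHomog k I) (hne : I ≠ ⊤)
    {f : MvPolynomial (Fin N) k} (hf : f ∈ I) : constantCoeff f = 0 := by
  have := hI f hf 0
  rw [homogeneousComponent_zero] at this
  by_contra h
  exact hne (Ideal.eq_top_of_isUnit_mem I this ((isUnit_iff_ne_zero.2 h).map C))

lemma mem_irr {I : Ideal (MvPolynomial (Fin N) k)} (hI : IdealHomog k I) (hne : I ≠ ⊤)
    (f : MvPolynomial (Fin N) k) :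
    Ideal.Quotient.mk I f ∈ irrelevantIdeal k I ↔ constantCoeff f = 0 := by
  have h0 : irrelevantIdeal k I = Ideal.span ((fun i => Ideal.Quotient.mk I (X i)) '' Set.univ) := by
    rw [irrelevantIdeal, Set.image_univ]
  have h1 : Ideal.span (X '' Set.univ : Set (MvPolynomial (Fin N) k)) =
      RingHom.ker (constantCoeff (σ := Fin N) (R := k)) := by
    ext g
    rw [mem_ideal_span_X_image, RingHom.mem_ker, constantCoeff_eq, ← notMem_support_iff]
    constructor
    · intro h h'
      obtain ⟨i, _, hi⟩ := h _ h'
      exact hi rfl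
    · intro h m hm
      by_contra! hc
      apply h
      have : m = 0 := by ext i; exact hc i trivial
      rwa [← this]
  rw [h0, mk_mem_span, h1, sup_eq_right.2 (fun g hg => const_zero hI hne hg), RingHom.mem_ker]

end conv

section final
open RingTheory.Sequence MvPolynomial Paper

variable {N : ℕ} {k : Type} [Field k]

lemma backward (n e : ℕ) (I : Ideal (MvPolynomial (Fin (n + e + 1)) k))
    (hI : IdealHomog k I) (hne : I ≠ ⊤) (G : Set (Fin (n + e + 1) →₀ ℕ))
    (hG : ∀ m ∈ G, ∀ i : Fin (n + e + 1), e ≤ (i : ℕ) → m i = 0)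
    (hG2 : initialIdeal k I = Ideal.span ((fun m => (monomial m (1 : k))) '' G)) :
    IsCMQuot k I (n + 1) := by
  have hLE : ∀ m, m ∈ LE I ↔ ∃ g ∈ G, g ≤ m := fun m => by
    rw [← mem_LE_iff, hG2, mem_span_mono]
  have hj : ∀ l : Fin (n + e + 1), e ≤ (l : ℕ) → ∀ m, m + Finsupp.single l 1 ∈ LE I → m ∈ LE I := by
    intro l hl m hm
    rw [hLE] at hm ⊢
    obtain ⟨g, hg, hgm⟩ := hm
    refine ⟨g, hg, fun i => ?_⟩
    by_cases hi : i = l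
    · rw [hi, hG g hg l hl]; exact Nat.zero_le _
    · have := hgm i
      rwa [Finsupp.add_apply, Finsupp.single_eq_of_ne hi, add_zero] at this
  have hmem : ∀ x ∈ ysList n e (fun i => Ideal.Quotient.mk I (X i)), x ∈ irrelevantIdeal k I := by
    intro x hx
    obtain ⟨i, _, rfl⟩ := (mem_ysList _ _ _ _).1 hx
    exact Ideal.subset_span ⟨i, rfl⟩
  refine ⟨ysList n e (fun i => Ideal.Quotient.mk I (X i)), ysList_length _ _ _, hmem, ?_⟩
  refine RingTheory.Sequence.IsRegular.mk ?_ ?_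
  · rw [weaklyRegular_ysList]
    intro j hje b
    obtain ⟨f, rfl⟩ := Ideal.Quotient.mk_surjective b
    intro hb
    have hb2 : Ideal.Quotient.mk I (X j * f) ∈
        Ideal.span ((fun i => Ideal.Quotient.mk I (X i)) '' {l | j < l}) := by
      rw [map_mul]; exact hb
    rw [mk_mem_span] at hb2 ⊢
    exact colon_of_std (fun l hl => hj l (hje.trans hl)) hb2
  · intro h
    have h1 : (1 : MvPolynomial (Fin (n + e + 1)) k ⧸ I) ∈
        (Ideal.ofList (ysList n e (fun i => Ideal.Quotient.mk I (X i))) •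
          (⊤ : Submodule (MvPolynomial (Fin (n + e + 1)) k ⧸ I) (MvPolynomial (Fin (n + e + 1)) k ⧸ I))) := by
      rw [← h]; trivial
    rw [smul_eq_mul, Ideal.mul_top] at h1
    have h2 : (Ideal.Quotient.mk I 1) ∈ irrelevantIdeal k I := by
      rw [map_one]
      exact Ideal.span_le.2 hmem h1
    rw [mem_irr hI hne] at h2
    simp at h2

lemma homog_sup {I : Ideal (MvPolynomial (Fin N) k)} (hI : IdealHomog k I) (s : Set (Fin N)) :
    IdealHomog k (I ⊔ Ideal.span (X '' s : Set (MvPolynomial (Fin N) k))) := by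
  intro f hf d
  obtain ⟨g, hg, h, hh, rfl⟩ := Submodule.mem_sup.1 hf
  rw [map_add]
  refine Submodule.add_mem_sup (hI g hg d) ?_
  rw [mem_ideal_span_X_image] at hh ⊢
  intro m hm
  apply hh
  rw [mem_support_iff, coeff_homogeneousComponent] at hm
  rw [mem_support_iff]
  split_ifs at hm with h
  · exact hm
  · exact absurd rfl hm

lemma homog_unit {Q : Ideal (MvPolynomial (Fin N) k)} (hQ : IdealHomog k Q)
    {f u : MvPolynomial (Fin N) k} {d : ℕ} (hf : f.IsHomogeneous d) (hu : constantCoeff u ≠ 0)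
    (h : u * f ∈ Q) : f ∈ Q := by
  have h1 := hQ _ h d
  have h2 : homogeneousComponent d (u * f) = C (constantCoeff u) * f := by
    conv_lhs => rw [← sum_homogeneousComponent u]
    rw [Finset.sum_mul, map_sum, Finset.sum_eq_single 0]
    · rw [homogeneousComponent_zero]
      have : (C (coeff 0 u) * f).IsHomogeneous d := by
        simpa using (isHomogeneous_C (Fin N) (coeff 0 u)).mul hf
      rw [homogeneousComponent_of_mem this, if_pos rfl]
      rfl
    · intro i _ hi
      have : (homogeneousComponent i u * f).IsHomogeneous (i + d) :=
        (homogeneousComponent_isHomogeneous i u).mul hf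
      rw [homogeneousComponent_of_mem this, if_neg (by omega)]
    · simp
  rw [h2] at h1
  have h3 := Q.mul_mem_left (C (constantCoeff u)⁻¹) h1
  rwa [← mul_assoc, ← C_mul, inv_mul_cancel₀ hu, C_1, one_mul] at h3

/-- the descent step -/
lemma descent {I : Ideal (MvPolynomial (Fin N) k)} (hI : IdealHomog k I) {j : Fin N}
    (hcol : ∀ d (f : MvPolynomial (Fin N) k), f.IsHomogeneous d →
      X j * f ∈ I ⊔ Ideal.span (X '' {l | j < l} : Set (MvPolynomial (Fin N) k)) →
      f ∈ I ⊔ Ideal.span (X '' {l | j < l} : Set (MvPolynomial (Fin N) k)))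
    {m : Fin N →₀ ℕ} (hj : ∀ l, j < l → m l = 0)
    (hm : m + Finsupp.single j 1 ∈ LE I) : m ∈ LE I := by
  have hdeg : ∀ a : Fin N →₀ ℕ, a.degree = tdeg a := fun a => rfl
  have hs1 : tdeg (Finsupp.single j 1) = 1 := by simp [tdeg]
  obtain ⟨p0, hp0, hlead⟩ := hm
  set p := homogeneousComponent (tdeg m + 1) p0 with hpdef
  have hp : p ∈ I := hI _ hp0 _
  have hpc : ∀ a, coeff a p = if tdeg a = tdeg m + 1 then coeff a p0 else 0 := fun a => by
    rw [hpdef, coeff_homogeneousComponent, hdeg]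
  have hpm : coeff (m + Finsupp.single j 1) p ≠ 0 := by
    rw [hpc, tdeg_add, hs1, if_pos rfl]
    exact mem_support_iff.1 hlead.1
  have hplt : ∀ a, coeff a p ≠ 0 → tdeg a = tdeg m + 1 ∧
      (a ≠ m + Finsupp.single j 1 → drlLt a (m + Finsupp.single j 1)) := by
    intro a ha
    rw [hpc] at ha
    split_ifs at ha with h
    · exact ⟨h, hlead.2 a (mem_support_iff.2 ha)⟩
    · exact absurd rfl ha
  set f := p.divMonomial (Finsupp.single j 1) with hf
  set h := p.modMonomial (Finsupp.single j 1) with hh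
  have e1 : X j * f + h = p := divMonomial_add_modMonomial_single p j
  have hfc : ∀ a, coeff a f = coeff (a + Finsupp.single j 1) p := fun a => by
    rw [hf, coeff_divMonomial, add_comm]
  have hhJ : h ∈ Ideal.span (X '' {l | j < l} : Set (MvPolynomial (Fin N) k)) := by
    rw [mem_ideal_span_X_image]
    intro a ha
    rw [mem_support_iff] at ha
    by_cases hle : Finsupp.single j 1 ≤ a
    · exact absurd (coeff_modMonomial_of_le _ hle) ha
    · rw [hh, coeff_modMonomial_of_not_le _ hle] at ha
      have haj : a j = 0 := by
        rw [Finsupp.single_le_iff] at hle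
        omega
      obtain ⟨h1, h2⟩ := hplt a ha
      have h3 : a ≠ m + Finsupp.single j 1 := by
        rintro rfl
        simp at haj
      rcases h2 h3 with h4 | ⟨_, i, hi, hi'⟩
      · rw [tdeg_add, hs1] at h4; omega
      · rcases lt_trichotomy i j with hij | hij | hij
        · have := hi' j hij
          simp [haj] at this
        · rw [hij, haj] at hi; omega
        · exact ⟨i, hij, by omega⟩
  have hfhom : f.IsHomogeneous (tdeg m) := by
    intro a ha
    rw [hfc] at ha
    have := (hplt _ ha).1
    rw [tdeg_add, hs1] at this
    have hw : Finsupp.weight 1 a = a.degree :=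
      (DFunLike.congr_fun Finsupp.degree_eq_weight_one a).symm
    rw [hw, hdeg]
    omega
  have hfQ := hcol _ f hfhom (by
    have : X j * f = p - h := by rw [← e1]; ring
    rw [this, sub_eq_add_neg]
    exact Submodule.add_mem_sup hp (neg_mem hhJ))
  obtain ⟨g, hg, h2, hh2, e2⟩ := Submodule.mem_sup.1 hfQ
  rw [mem_ideal_span_X_image] at hh2
  have hgc : ∀ a, coeff a g = coeff a f - coeff a h2 := fun a => by
    rw [← e2, coeff_add]; ring
  refine ⟨homogeneousComponent (tdeg m) g, hI _ hg _, ?_, ?_⟩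
  · rw [mem_support_iff, coeff_homogeneousComponent, hdeg, if_pos rfl, hgc, hfc]
    have : coeff m h2 = 0 := by
      by_contra hc
      obtain ⟨l, hl, hml⟩ := hh2 m (mem_support_iff.2 hc)
      exact hml (hj l hl)
    rw [this, sub_zero]
    exact hpm
  · intro a ha hne
    rw [mem_support_iff, coeff_homogeneousComponent, hdeg] at ha
    split_ifs at ha with hta
    · rw [hgc, hfc] at ha
      by_cases hc : coeff a h2 = 0
      · rw [hc, sub_zero] at ha
        have := (hplt _ ha).2 (fun h => hne (add_right_cancel h))
        rwa [drl_add_right] at this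
      · obtain ⟨l, hl, hal⟩ := hh2 a (mem_support_iff.2 hc)
        rcases drl_total hne with h3 | h3
        · exact h3
        · exfalso
          rcases h3 with h3 | ⟨_, i, hi, hi'⟩
          · omega
          · have hij : i ≤ j := by
              by_contra hc
              rw [hj i (not_le.1 hc)] at hi
              omega
            have := hi' l (lt_of_le_of_lt hij hl)
            rw [hj l hl] at this
            exact hal this.symm
    · exact absurd rfl ha

/-- conclude from the descent step -/
lemma gens (e : ℕ) {I : Ideal (MvPolynomial (Fin N) k)}
    (hd : ∀ (j : Fin N), e ≤ (j : ℕ) → ∀ m : Fin N →₀ ℕ, (∀ l, j < l → m l = 0) →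
      m + Finsupp.single j 1 ∈ LE I → m ∈ LE I) :
    ∃ G : Set (Fin N →₀ ℕ),
        (∀ m ∈ G, ∀ i : Fin N, e ≤ (i : ℕ) → m i = 0) ∧
        initialIdeal k I = Ideal.span ((fun m => (monomial m (1 : k))) '' G) ∧
        (∀ m ∈ G, (monomial m (1 : k)) ∉
          Ideal.span ((fun m' => (monomial m' (1 : k))) '' (G \ {m}))) := by
  classical
  have red : ∀ (t : ℕ) (m : Fin N →₀ ℕ), tdeg m = t → m ∈ LE I →
      ∃ m0 ∈ LE I, m0 ≤ m ∧ ∀ i : Fin N, e ≤ (i : ℕ) → m0 i = 0 := by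
    intro t
    induction t with
    | zero =>
      intro m ht hm
      exact ⟨m, hm, le_rfl, fun i _ => Nat.le_zero.1 (ht ▸ le_tdeg m i)⟩
    | succ t ih =>
      intro m ht hm
      by_cases hall : ∀ i : Fin N, e ≤ (i : ℕ) → m i = 0
      · exact ⟨m, hm, le_rfl, hall⟩
      · push Not at hall
        obtain ⟨i, hi, hmi⟩ := hall
        have hne : m.support.Nonempty := ⟨i, Finsupp.mem_support_iff.2 hmi⟩
        set j := m.support.max' hne with hjdef
        have hij : i ≤ j := Finset.le_max' _ _ (Finsupp.mem_support_iff.2 hmi)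
        have hmj : m j ≠ 0 := Finsupp.mem_support_iff.1 (Finset.max'_mem _ hne)
        have hml : ∀ l, j < l → m l = 0 := by
          intro l hl
          by_contra hc
          exact absurd (Finset.le_max' m.support l (Finsupp.mem_support_iff.2 hc)) (not_le.2 hl)
        have e1 : m - Finsupp.single j 1 + Finsupp.single j 1 = m := by
          apply tsub_add_cancel_of_le
          rw [Finsupp.single_le_iff]; omega
        have h1 : m - Finsupp.single j 1 ∈ LE I := by
          apply hd j (hi.trans hij)
          · intro l hl
            rw [Finsupp.tsub_apply, hml l hl, Nat.zero_sub]
          · rwa [e1]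
        have h2 : tdeg (m - Finsupp.single j 1) = t := by
          have := congrArg tdeg e1
          rw [tdeg_add, ht] at this
          have hs1 : tdeg (Finsupp.single j 1) = 1 := by simp [tdeg]
          omega
        obtain ⟨m0, h3, h4, h5⟩ := ih _ h2 h1
        exact ⟨m0, h3, h4.trans tsub_le_self, h5⟩
  let T : Set (Fin N →₀ ℕ) := {m | m ∈ LE I ∧ ∀ i : Fin N, e ≤ (i : ℕ) → m i = 0}
  have hmin : ∀ m ∈ T, ∃ g, Minimal (· ∈ T) g ∧ g ≤ m := by
    intro m hm
    obtain ⟨g, hg, hg'⟩ := exists_minimal_le_of_wellFoundedLT (· ∈ T) m hm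
    exact ⟨g, hg', hg⟩
  refine ⟨{g | Minimal (· ∈ T) g}, fun m hm => hm.1.2, ?_, ?_⟩
  · rw [initialIdeal_eq]
    apply le_antisymm
    · rw [Ideal.span_le]
      rintro _ ⟨m, hm, rfl⟩
      obtain ⟨m0, h1, h2, h3⟩ := red _ m rfl hm
      obtain ⟨g, hg, hg'⟩ := hmin m0 ⟨h1, h3⟩
      exact (mem_span_mono _ m).2 ⟨g, hg, hg'.trans h2⟩
    · exact Ideal.span_mono (Set.image_mono fun g hg => hg.1.1)
  · intro m hm hmem
    obtain ⟨g, ⟨hg, hne⟩, hle⟩ := (mem_span_mono _ m).1 hmem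
    exact hne (le_antisymm hle (hm.2 hg.1 hle))

lemma colon_of_CM (n e : ℕ) (I : Ideal (MvPolynomial (Fin (n + e + 1)) k))
    (hI : IdealHomog k I) (hne : I ≠ ⊤) (hNN : IsNoetherNormalization k e I)
    (hCM : IsCMQuot k I (n + 1)) (j : Fin (n + e + 1)) (hje : e ≤ (j : ℕ))
    (d : ℕ) (f : MvPolynomial (Fin (n + e + 1)) k) (hfh : f.IsHomogeneous d)
    (hf : X j * f ∈ I ⊔ Ideal.span (X '' {l | j < l} : Set (MvPolynomial (Fin (n + e + 1)) k))) :
    f ∈ I ⊔ Ideal.span (X '' {l | j < l} : Set (MvPolynomial (Fin (n + e + 1)) k)) := by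
  have hker : irrelevantIdeal k I =
      RingHom.ker (Ideal.Quotient.lift I (constantCoeff (σ := Fin (n + e + 1)) (R := k))
        (fun g hg => const_zero hI hne hg)) := by
    ext b
    obtain ⟨g, rfl⟩ := Ideal.Quotient.mk_surjective b
    rw [mem_irr hI hne, RingHom.mem_ker, Ideal.Quotient.lift_mk]
  haveI hprime : (irrelevantIdeal k I).IsPrime := by
    rw [hker]; exact RingHom.ker_isPrime _
  let A := Localization.AtPrime (irrelevantIdeal k I)
  let φ := algebraMap (MvPolynomial (Fin (n + e + 1)) k ⧸ I) A
  haveI : IsNoetherianRing A :=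
    IsLocalization.isNoetherianRing (irrelevantIdeal k I).primeCompl A inferInstance
  let zR : Fin (n + e + 1) → (MvPolynomial (Fin (n + e + 1)) k ⧸ I) :=
    fun i => Ideal.Quotient.mk I (X i)
  let z : Fin (n + e + 1) → A := fun i => φ (zR i)
  have hirr : ∀ i, zR i ∈ irrelevantIdeal k I := fun i => Ideal.subset_span ⟨i, rfl⟩
  have hmax : ∀ x, x ∈ irrelevantIdeal k I → φ x ∈ IsLocalRing.maximalIdeal A := fun x hx =>
    (IsLocalization.AtPrime.to_map_mem_maximal_iff A (irrelevantIdeal k I) x).2 hx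
  have hreg : IsWeaklyRegular A (ysList n e z) := by
    apply params_regular
    · obtain ⟨rs, h1, h2, h3⟩ := hCM
      refine ⟨rs.map φ, by rw [List.length_map, h1, ysList_length], ?_, ?_⟩
      · intro r hr
        obtain ⟨x, hx, rfl⟩ := List.mem_map.1 hr
        exact hmax x (h2 x hx)
      · exact h3.toIsWeaklyRegular.isRegular_of_isLocalization_of_mem A (irrelevantIdeal k I) h2
    · intro r hr
      obtain ⟨i, _, rfl⟩ := (mem_ysList _ _ _ _).1 hr
      exact hmax _ (hirr i)
    · intro P _ hP
      haveI := P.2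
      letI : Algebra (MvPolynomial {i : Fin (n + e + 1) // e ≤ (i : ℕ)} k)
        (MvPolynomial (Fin (n + e + 1)) k ⧸ I) := (nnMap k e I).toRingHom.toAlgebra
      haveI : Module.Finite (MvPolynomial {i : Fin (n + e + 1) // e ≤ (i : ℕ)} k)
        (MvPolynomial (Fin (n + e + 1)) k ⧸ I) := hNN.2
      let P' := P.asIdeal.comap φ
      haveI : P'.IsPrime := Ideal.comap_isPrime _ _
      have hP'le : P' ≤ irrelevantIdeal k I := by
        intro x hx
        rw [← IsLocalization.AtPrime.to_map_mem_maximal_iff A (irrelevantIdeal k I) x]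
        exact IsLocalRing.le_maximalIdeal P.2.ne_top hx
      have hker2 : RingHom.ker (constantCoeff (σ := {i : Fin (n + e + 1) // e ≤ (i : ℕ)}) (R := k)) ≤
          P'.comap (algebraMap (MvPolynomial {i : Fin (n + e + 1) // e ≤ (i : ℕ)} k)
            (MvPolynomial (Fin (n + e + 1)) k ⧸ I)) := by
        intro g hg
        have hg2 : g ∈ Ideal.span (X '' Set.univ :
            Set (MvPolynomial {i : Fin (n + e + 1) // e ≤ (i : ℕ)} k)) := by
          rw [mem_ideal_span_X_image]
          intro m hm
          by_contra! hc
          have hm0 : m = 0 := by ext i; exact hc i trivial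
          rw [hm0, mem_support_iff] at hm
          exact hm hg
        refine Ideal.span_le.2 ?_ hg2
        rintro _ ⟨i, _, rfl⟩
        show φ (nnMap k e I (X i)) ∈ P.asIdeal
        rw [nnMap, aeval_X]
        exact hP _ ((mem_ysList _ _ _ _).2 ⟨i.1, i.2, rfl⟩)
      haveI hkmax : (RingHom.ker (constantCoeff (σ := {i : Fin (n + e + 1) // e ≤ (i : ℕ)})
          (R := k))).IsMaximal :=
        RingHom.ker_isMaximal_of_surjective _ (fun c => ⟨C c, constantCoeff_C _ c⟩)
      have hcm : (P'.comap (algebraMap (MvPolynomial {i : Fin (n + e + 1) // e ≤ (i : ℕ)} k)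
            (MvPolynomial (Fin (n + e + 1)) k ⧸ I))).IsMaximal := by
        rw [← hkmax.eq_of_le (Ideal.comap_ne_top _ (Ideal.IsPrime.ne_top inferInstance)) hker2]
        exact hkmax
      have hPm : P'.IsMaximal := Ideal.isMaximal_of_isIntegral_of_isMaximal_comap P' hcm
      have hPeq : P' = irrelevantIdeal k I := hPm.eq_of_le hprime.ne_top hP'le
      apply le_antisymm (IsLocalRing.le_maximalIdeal P.2.ne_top)
      rw [← IsLocalization.AtPrime.map_eq_maximalIdeal (irrelevantIdeal k I) A, Ideal.map_le_iff_le_comap]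
      exact hPeq.ge
  rw [weaklyRegular_ysList] at hreg
  have hspan : Ideal.span (z '' {l | j < l}) = (Ideal.span (zR '' {l | j < l})).map φ := by
    rw [Ideal.map_span, Set.image_image]
  have h1 : φ (Ideal.Quotient.mk I f) ∈ Ideal.span (z '' {l | j < l}) := by
    apply hreg j hje
    rw [hspan]
    show φ (zR j) * _ ∈ _
    rw [← map_mul]
    apply Ideal.mem_map_of_mem
    show Ideal.Quotient.mk I (X j) * _ ∈ _
    rw [← map_mul]
    exact (mk_mem_span I _ _).2 hf
  rw [hspan, IsLocalization.mem_map_algebraMap_iff (irrelevantIdeal k I).primeCompl A] at h1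
  obtain ⟨⟨⟨a, ha⟩, ⟨s, hs⟩⟩, h2⟩ := h1
  simp only at h2
  rw [← map_mul] at h2
  obtain ⟨⟨c, hc⟩, h3⟩ := (IsLocalization.eq_iff_exists (irrelevantIdeal k I).primeCompl A).1 h2
  simp only at h3
  obtain ⟨u, hu⟩ := Ideal.Quotient.mk_surjective (c * s)
  have hcs : c * s ∈ (irrelevantIdeal k I).primeCompl := Submonoid.mul_mem _ hc hs
  have hu0 : constantCoeff u ≠ 0 := by
    rw [Ne, ← mem_irr hI hne, hu]
    exact hcs
  refine homog_unit (homog_sup hI _) hfh hu0 ?_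
  rw [← mk_mem_span, map_mul, hu]
  have : c * s * Ideal.Quotient.mk I f = c * (Ideal.Quotient.mk I f * s) := by ring
  rw [this, h3]
  exact Ideal.mul_mem_left _ _ ha

end final

end BG

/-- Proposition 2.5 (Bermejo-Gimenez): `R = S₀/I` is Cohen-Macaulay iff the initial ideal
`in(I)` w.r.t. degrevlex is minimally generated by monomials in `x_0, …, x_{e-1}` only. -/
theorem stmt5 (k : Type) [Field k] [Infinite k] (n e : ℕ) (he : 0 < e)
    (I : Ideal (MvPolynomial (Fin (n + e + 1)) k))
    (hIhom : Paper.IdealHomog k I) (hproper : I ≠ ⊤)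
    (hNN : Paper.IsNoetherNormalization k e I) :
    Paper.IsCMQuot k I (n + 1) ↔
      ∃ G : Set (Fin (n + e + 1) →₀ ℕ),
        (∀ m ∈ G, ∀ i : Fin (n + e + 1), e ≤ (i : ℕ) → m i = 0) ∧
        Paper.initialIdeal k I =
          Ideal.span ((fun m => (MvPolynomial.monomial m (1 : k))) '' G) ∧
        (∀ m ∈ G, (MvPolynomial.monomial m (1 : k)) ∉
          Ideal.span ((fun m' => (MvPolynomial.monomial m' (1 : k))) '' (G \ {m}))) := by
  constructor
  · intro hCM
    exact BG.gens e fun j hj m hm =>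
      BG.descent hIhom (BG.colon_of_CM n e I hIhom hproper hNN hCM j hj) hm
  · rintro ⟨G, hG, hG2, _⟩
    exact BG.backward n e I hIhom hproper G hG hG2
end

section
/- Let $X \subseteq \mathbb{P}^{n+e}$ be a non-degenerate closed subscheme of dimension $n$, codimension $e$, and reduction number $r$. Then $\deg(X) \le \binom{e+r}{r}$. -/
set_option synthInstance.maxHeartbeats 1000000
set_option maxHeartbeats 2000000

namespace Aux
open MvPolynomial

lemma finrank_homog (k : Type) [Field k] (m d : ℕ) :
    Module.finrank k (homogeneousSubmodule (Fin m) k d) = m.multichoose d := by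
  rw [homogeneousSubmodule_eq_finsupp_supported]
  have e := AddMonoidAlgebra.supportedEquivFinsupp (S := k) (R := k)
    {d' : Fin m →₀ ℕ | d'.degree = d}
  have hs : {d' : Fin m →₀ ℕ | d'.degree = d} =
      ((Finset.univ.finsuppAntidiag d : Finset (Fin m →₀ ℕ)) : Set (Fin m →₀ ℕ)) := by
    ext x
    simp [Finset.mem_finsuppAntidiag, Finsupp.degree_eq_sum]
  refine e.finrank_eq.trans ?_
  rw [hs, Module.finrank_finsupp_self]
  simp [Finset.card_finsuppAntidiag_nat_eq_multichoose]

lemma aeval_mul_homog {k R : Type} [Field k] [CommRing R] [Algebra k R] {m d : ℕ}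
    (F : MvPolynomial (Fin m) k) (hF : F.IsHomogeneous d) (c : Fin m → k) (w : R) :
    aeval (fun i => algebraMap k R (c i) * w) F = algebraMap k R (eval c F) * w ^ d := by
  rw [aeval_def, eval₂_eq', eval_eq', map_sum, Finset.sum_mul]
  refine Finset.sum_congr rfl fun s hs => ?_
  have : ∑ i, s i = d := by
    have := hF (mem_support_iff.mp hs)
    rw [← this, Finsupp.weight_apply, Finsupp.sum_fintype _ _ (by simp)]; simp
  simp only [mul_pow, Finset.prod_mul_distrib, map_mul, map_prod, map_pow, Finset.prod_pow_eq_pow_sum, this]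
  ring

lemma step {k R : Type} [Field k] [Infinite k] [CommRing R] [Algebra k R] (V : Submodule k R)
    {m d : ℕ} (hd : d ≠ 0) (y : Fin (m + 1) → R) (hy : ∀ i, y i ∈ V)
    (F : MvPolynomial (Fin (m + 1)) k) (hF : F.IsHomogeneous d) (hF0 : F ≠ 0)
    (hFy : aeval y F = 0) :
    ∃ y' : Fin m → R, (∀ i, y' i ∈ V) ∧
      Ideal.span (Set.range y) ≤ (Ideal.span (Set.range y')).radical := by
  obtain ⟨a, ha⟩ : ∃ a, eval a F ≠ 0 := by
    by_contra! h
    exact hF0 (hF.eq_zero_of_forall_eval_eq_zero h)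
  obtain ⟨j, hj⟩ : ∃ j, a j ≠ 0 := by
    by_contra! h
    apply ha
    have := aeval_mul_homog (R := k) F hF a 0
    rw [show a = fun _ => 0 from funext h] at this ⊢
    simpa [hd, aeval_def] using this
  let y' : Fin m → R := fun i => y (j.succAbove i) - (a (j.succAbove i) / a j) • y j
  refine ⟨y', fun i => V.sub_mem (hy _) (V.smul_mem _ (hy _)), ?_⟩
  set J := Ideal.span (Set.range y') with hJ
  have key : ∀ i, Ideal.Quotient.mk J (y i) =
      algebraMap k (R ⧸ J) (a i / a j) * Ideal.Quotient.mk J (y j) := by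
    intro i
    rcases eq_or_ne i j with rfl | hij
    · simp [hj]
    · obtain ⟨i, rfl⟩ := Fin.exists_succAbove_eq hij
      have : y' i ∈ J := Ideal.subset_span ⟨i, rfl⟩
      rw [← Ideal.Quotient.eq_zero_iff_mem] at this
      simp only [y', map_sub, sub_eq_zero] at this
      rw [this, Algebra.smul_def, map_mul]
      rfl
  have h1 : aeval (fun i => Ideal.Quotient.mk J (y i)) F = 0 := by
    have := congrArg (Ideal.Quotient.mkₐ k J) hFy
    rw [MvPolynomial.comp_aeval_apply, map_zero] at this
    exact this
  have h2 : Ideal.Quotient.mk J (y j) ^ d = 0 := by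
    have h3 : (fun i => Ideal.Quotient.mk J (y i)) = fun i =>
      algebraMap k (R ⧸ J) (a i) * (algebraMap k (R ⧸ J) (a j)⁻¹ * Ideal.Quotient.mk J (y j)) := by
      funext i
      rw [key, div_eq_mul_inv, map_mul, mul_assoc]
    rw [h3, aeval_mul_homog F hF, mul_pow, ← map_pow, ← mul_assoc, ← map_mul] at h1
    have hu : IsUnit (algebraMap k (R ⧸ J) (eval a F * (a j)⁻¹ ^ d)) := by
      apply IsUnit.map
      exact (mul_ne_zero ha (pow_ne_zero _ (inv_ne_zero hj))).isUnit
    exact (hu.mul_right_eq_zero).mp h1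
  rw [Ideal.span_le]
  rintro _ ⟨i, rfl⟩
  refine ⟨d, ?_⟩
  rw [← Ideal.Quotient.eq_zero_iff_mem, map_pow, key, mul_pow, h2, mul_zero]

lemma numeric1 (P : Polynomial ℚ) (n : ℕ) (hP : P.natDegree = n) :
    ∀ᶠ d : ℕ in Filter.atTop, P.eval (d : ℚ) < ((n + 2).multichoose d : ℚ) := by
  have h : Filter.Tendsto (fun x : ℚ => P.eval x / (Polynomial.X ^ (n + 1) : Polynomial ℚ).eval x)
      Filter.atTop (nhds 0) := by
    apply Polynomial.div_tendsto_atTop_zero_of_degree_lt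
    rw [Polynomial.degree_X_pow]
    exact lt_of_le_of_lt Polynomial.degree_le_natDegree (by rw [hP]; exact_mod_cast Nat.lt_succ_self n)
  have h' := h.comp tendsto_natCast_atTop_atTop
  have hpos : (0 : ℚ) < 1 / ((n + 1).factorial : ℚ) := by positivity
  filter_upwards [h'.eventually (gt_mem_nhds hpos), Filter.eventually_gt_atTop 0] with d hd hd0
  simp only [Function.comp, Polynomial.eval_pow, Polynomial.eval_X] at hd
  have hd0' : (0 : ℚ) < d := by exact_mod_cast hd0
  rw [div_lt_iff₀ (by positivity)] at hd
  refine hd.trans_le ?_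
  have h2 := Nat.pow_le_choose (α := ℚ) (n + 1) (n + 1 + d)
  rw [Nat.multichoose_eq, show n + 2 + d - 1 = n + 1 + d by omega, ← Nat.choose_symm_add]
  refine le_trans ?_ h2
  rw [one_div_mul_eq_div]
  gcongr
  omega

lemma numeric2 (P : Polynomial ℚ) (n C : ℕ) (hP : P.natDegree = n)
    (h : ∀ᶠ d : ℕ in Filter.atTop, P.eval (d : ℚ) ≤ C * ((n + 1).multichoose d : ℚ)) :
    P.leadingCoeff * (n.factorial : ℚ) ≤ C := by
  by_cases hP0 : P = 0
  · simp [hP0]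
  have h1 : Filter.Tendsto (fun x : ℚ => P.eval x / ((Polynomial.X + Polynomial.C (n : ℚ)) ^ n : Polynomial ℚ).eval x)
      Filter.atTop (nhds (P.leadingCoeff / ((Polynomial.X + Polynomial.C (n : ℚ)) ^ n : Polynomial ℚ).leadingCoeff)) := by
    apply Polynomial.div_tendsto_atTop_leadingCoeff_div_of_degree_eq
    rw [Polynomial.degree_pow, Polynomial.degree_X_add_C, Polynomial.degree_eq_natDegree hP0, hP]
    simp
  rw [Polynomial.leadingCoeff_pow, Polynomial.leadingCoeff_X_add_C, one_pow, div_one] at h1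
  have h' := h1.comp tendsto_natCast_atTop_atTop
  have hle : P.leadingCoeff ≤ C / (n.factorial : ℚ) := by
    refine le_of_tendsto h' ?_
    filter_upwards [h, Filter.eventually_gt_atTop 0] with d hd hd0
    have hd0' : (0 : ℚ) < d := by exact_mod_cast hd0
    simp only [Function.comp, Polynomial.eval_pow, Polynomial.eval_X, Polynomial.eval_add, Polynomial.eval_C]
    rw [div_le_iff₀ (by positivity)]
    refine hd.trans ?_
    rw [Nat.multichoose_eq, show n + 1 + d - 1 = n + d by omega, ← Nat.choose_symm_add]
    have := Nat.choose_le_pow_div (α := ℚ) n (n + d)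
    calc (C : ℚ) * ((n + d).choose n : ℚ) ≤ C * (((n + d : ℕ) : ℚ) ^ n / n.factorial) := by gcongr
      _ = _ := by push_cast; ring
  rwa [le_div_iff₀ (by positivity)] at hle

lemma hc_mul {k : Type} [Field k] {N r : ℕ} (l g : MvPolynomial (Fin N) k) (hl : l.IsHomogeneous 1) :
    homogeneousComponent (r + 1) (l * g) = l * homogeneousComponent r g := by
  let _ : GradedAlgebra (homogeneousSubmodule (Fin N) k) := MvPolynomial.gradedAlgebra
  have := DirectSum.coe_decompose_mul_of_left_mem_of_le (homogeneousSubmodule (Fin N) k) (a := l) (b := g)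
    (i := 1) (n := r + 1) hl (by omega)
  have e1 : ∀ (p : MvPolynomial (Fin N) k) i, (DirectSum.decompose (homogeneousSubmodule (Fin N) k) p i : MvPolynomial (Fin N) k) = homogeneousComponent i p :=
    fun p i => decomposition.decompose'_apply p i
  simpa [e1, -DirectSum.decompose_mul] using this

section
variable {k : Type} [Field k]

lemma map_aeval_homog {R : Type} [CommRing R] [Algebra k R] {m : ℕ} (y : Fin m → R) (d : ℕ) :
    (homogeneousSubmodule (Fin m) k d).map (aeval y : MvPolynomial (Fin m) k →ₐ[k] R).toLinearMap =
      (Submodule.span k (Set.range y)) ^ d := by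
  rw [← homogeneousSubmodule_one_pow, Submodule.map_pow, homogeneousSubmodule_one_eq_span_X,
    Submodule.map_span, ← Set.range_comp]
  congr 3
  funext i
  simp

lemma fd_homog (m d : ℕ) : FiniteDimensional k (homogeneousSubmodule (Fin m) k d) :=
  Module.Finite.iff_fg.mpr (homogeneousSubmodule_fg (Fin m) k d)

lemma finrank_span_pow_le {R : Type} [CommRing R] [Algebra k R] {m : ℕ} (y : Fin m → R) (d : ℕ) :
    Module.finrank k ((Submodule.span k (Set.range y)) ^ d : Submodule k R) ≤ m.multichoose d := by
  have := fd_homog (k := k) m d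
  rw [← map_aeval_homog, ← finrank_homog k m d]
  exact Submodule.finrank_map_le _ _

lemma qc_pow {N : ℕ} (I : Ideal (MvPolynomial (Fin N) k)) (d : ℕ) :
    Paper.quotComponent k I d = (Paper.quotComponent k I 1) ^ d := by
  unfold Paper.quotComponent
  rw [← homogeneousSubmodule_one_pow, Submodule.map_pow]

lemma qc_fd {N : ℕ} (I : Ideal (MvPolynomial (Fin N) k)) (d : ℕ) :
    FiniteDimensional k (Paper.quotComponent k I d) := by
  have := fd_homog (k := k) N d
  unfold Paper.quotComponent
  infer_instance

lemma reduce [Infinite k] {N : ℕ} (I : Ideal (MvPolynomial (Fin N) k)) (n D : ℕ)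
    (hD : Paper.HasDeg k I n D) (j : ℕ) :
    ∀ y : Fin (n + 1 + j) → MvPolynomial (Fin N) k ⧸ I, (∀ i, y i ∈ Paper.quotComponent k I 1) →
    ∃ y' : Fin (n + 1) → MvPolynomial (Fin N) k ⧸ I, (∀ i, y' i ∈ Paper.quotComponent k I 1) ∧
      Ideal.span (Set.range y) ≤ (Ideal.span (Set.range y')).radical := by
  induction j with
  | zero => exact fun y hy => ⟨y, hy, Ideal.le_radical⟩
  | succ j ih =>
    intro y hy
    obtain ⟨P, hPn, -, hP⟩ := hD
    obtain ⟨d, ⟨h1, h2⟩, h0⟩ := ((hP.and (numeric1 P n hPn)).and (Filter.eventually_gt_atTop 0)).exists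
    have hlt : Paper.hilbFn k I d < (n + 1 + (j + 1)).multichoose d := by
      rw [← h1] at h2
      refine lt_of_lt_of_le (by exact_mod_cast h2) ?_
      rw [Nat.multichoose_eq, Nat.multichoose_eq]
      exact Nat.choose_le_choose _ (by omega)
    have hle : (homogeneousSubmodule (Fin (n + 1 + (j + 1))) k d).map
        (aeval y : MvPolynomial _ k →ₐ[k] MvPolynomial (Fin N) k ⧸ I).toLinearMap ≤
        Paper.quotComponent k I d := by
      rw [map_aeval_homog, qc_pow I d]
      exact pow_le_pow_left₀ bot_le (Submodule.span_le.mpr (by rintro _ ⟨i, rfl⟩; exact hy i)) _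
    have := fd_homog (k := k) (n + 1 + (j + 1)) d
    have := qc_fd I d
    obtain ⟨F, hF, hFy, hF0⟩ : ∃ F ∈ homogeneousSubmodule (Fin (n + 1 + (j + 1))) k d,
        aeval y F = 0 ∧ F ≠ 0 := by
      by_contra! hcon
      have hinj : Function.Injective ((aeval y : MvPolynomial _ k →ₐ[k]
          MvPolynomial (Fin N) k ⧸ I).toLinearMap.domRestrict
            (homogeneousSubmodule (Fin (n + 1 + (j + 1))) k d)) := by
        rw [injective_iff_map_eq_zero]
        intro a ha
        exact Subtype.ext (hcon a.1 a.2 ha)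
      have := LinearMap.finrank_range_of_inj hinj
      rw [LinearMap.range_domRestrict, finrank_homog] at this
      have h3 := Submodule.finrank_mono hle
      unfold Paper.hilbFn at hlt
      omega
    obtain ⟨y1, hy1, hr1⟩ := step (Paper.quotComponent k I 1) (m := n + 1 + j) h0.ne' y hy F hF hF0 hFy
    obtain ⟨y2, hy2, hr2⟩ := ih y1 hy1
    exact ⟨y2, hy2, hr1.trans (Ideal.radical_le_radical_iff.mpr hr2)⟩

lemma set_nonempty [Infinite k] (n e D : ℕ)
    (I : Ideal (MvPolynomial (Fin (n + e + 1)) k))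
    (hnd : Paper.Nondegenerate k I) (hD : Paper.HasDeg k I n D) :
    {t | 0 < t ∧ ∃ L : Finset (MvPolynomial (Fin (n + e + 1)) k ⧸ I),
    (L : Set (MvPolynomial (Fin (n + e + 1)) k ⧸ I)) ⊆ Paper.quotComponent k I 1 ∧ L.card = n + 1 ∧
    Paper.quotComponent k I (t + 1) ≤
      (Ideal.span (L : Set (MvPolynomial (Fin (n + e + 1)) k ⧸ I))).restrictScalars k}.Nonempty := by
  classical
  have hX : ∀ i, Ideal.Quotient.mk I (X i) ∈ Paper.quotComponent k I 1 := fun i =>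
    ⟨X i, isHomogeneous_X k i, rfl⟩
  obtain ⟨y, hy, hr⟩ := reduce I n D hD e
    (fun i => Ideal.Quotient.mk I (X (Fin.cast (by omega) i))) (fun i => hX _)
  have hx0 : Ideal.Quotient.mk I (X 0) ≠ 0 := by
    intro h
    rw [Ideal.Quotient.eq_zero_iff_mem] at h
    exact X_ne_zero _ (hnd _ h (isHomogeneous_X k 0))
  have hinf : (Paper.quotComponent k I 1 : Set (MvPolynomial (Fin (n + e + 1)) k ⧸ I)).Infinite := by
    refine Set.infinite_of_injective_forall_mem (f := fun c : k => c • Ideal.Quotient.mk I (X 0))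
      (smul_left_injective k hx0) (fun c => Submodule.smul_mem _ _ (hX 0))
  have hsub : Set.range y ⊆ (Paper.quotComponent k I 1 : Set (MvPolynomial (Fin (n + e + 1)) k ⧸ I)) := by
    rintro _ ⟨i, rfl⟩; exact hy i
  obtain ⟨T, hyT, hT, hTc⟩ : ∃ T : Set (MvPolynomial (Fin (n + e + 1)) k ⧸ I),
      Set.range y ⊆ T ∧ T ⊆ Paper.quotComponent k I 1 ∧ T.ncard = n + 1 := by
    obtain ⟨T, h1, h2, h3⟩ := hinf.exists_superset_ncard_eq hsub (Set.finite_range y) (k := n + 1) (by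
      rw [← Set.image_univ]
      exact (Set.ncard_image_le Set.finite_univ).trans (by simp [Set.ncard_univ]))
    exact ⟨T, h1, h2, h3⟩
  have hTf : T.Finite := Set.finite_of_ncard_pos (by omega)
  have hle : (idealOfVars (Fin (n + e + 1)) k).map (Ideal.Quotient.mk I) ≤ (Ideal.span T).radical := by
    rw [idealOfVars, Ideal.map_span, Ideal.span_le]
    rintro _ ⟨_, ⟨i, rfl⟩, rfl⟩
    refine Ideal.radical_mono (Ideal.span_mono hyT) (hr (Ideal.subset_span ⟨Fin.cast (by omega) i, ?_⟩))
    simp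
  obtain ⟨s, hs⟩ := Ideal.exists_pow_le_of_le_radical_of_fg hle
    (Ideal.FG.map (idealOfVars_fg _ _) _)
  refine ⟨s + 1, by omega, hTf.toFinset, by simpa using hT, ?_, ?_⟩
  · rw [← hTc, Set.ncard_eq_toFinset_card T hTf]
  · rintro _ ⟨f, hf, rfl⟩
    simp only [Set.Finite.coe_toFinset]
    refine hs ?_
    rw [← Ideal.map_pow]
    refine Ideal.mem_map_of_mem _ ?_
    rw [mem_pow_idealOfVars_iff']
    intro x hx
    by_contra hne
    have := hf hne
    rw [Finsupp.weight_apply, Finsupp.sum_fintype _ _ (by simp)] at this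
    rw [Finsupp.degree_eq_sum] at hx
    simp at this
    omega


lemma finrank_mul_le {R : Type} [CommRing R] [Algebra k R] (M N : Submodule k R)
    [FiniteDimensional k M] [FiniteDimensional k N] :
    Module.finrank k (M * N : Submodule k R) ≤ Module.finrank k M * Module.finrank k N := by
  rw [← Submodule.mulMap_range, ← Module.finrank_tensorProduct]
  exact LinearMap.finrank_range_le _

lemma add_pow_le {R : Type} [CommRing R] [Algebra k R] (U Z : Submodule k R) (r : ℕ) :
    (U + Z) ^ (r + 1) ≤ U * (U + Z) ^ r + Z ^ (r + 1) := by
  induction r with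
  | zero => simp
  | succ r ih =>
    calc (U + Z) ^ (r + 1 + 1) = U * (U + Z) ^ (r + 1) + Z * (U + Z) ^ (r + 1) := by ring
      _ ≤ U * (U + Z) ^ (r + 1) + Z * (U * (U + Z) ^ r + Z ^ (r + 1)) := by gcongr
      _ = U * (U + Z) ^ (r + 1) + (U * (Z * (U + Z) ^ r) + Z ^ (r + 1 + 1)) := by ring
      _ ≤ U * (U + Z) ^ (r + 1) + (U * (U + Z) ^ (r + 1) + Z ^ (r + 1 + 1)) := by
          rw [pow_succ' (U + Z) r]
          gcongr
          exact le_sup_right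
      _ = _ := by rw [← add_assoc]; congr 1; exact sup_idem _

lemma fd_pow {R : Type} [CommRing R] [Algebra k R] (M : Submodule k R)
    [FiniteDimensional k M] (d : ℕ) : FiniteDimensional k (M ^ d : Submodule k R) :=
  Module.Finite.iff_fg.mpr ((Module.Finite.iff_fg.mp ‹_›).pow d)

lemma fd_mul {R : Type} [CommRing R] [Algebra k R] (M N : Submodule k R)
    [FiniteDimensional k M] [FiniteDimensional k N] :
    FiniteDimensional k (M * N : Submodule k R) :=
  Module.Finite.iff_fg.mpr ((Module.Finite.iff_fg.mp ‹_›).mul (Module.Finite.iff_fg.mp ‹_›))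

lemma finrank_bound {R : Type} [CommRing R] [Algebra k R] (U Z : Submodule k R)
    [FiniteDimensional k U] [FiniteDimensional k Z] (n e d : ℕ)
    (hU : ∀ m, Module.finrank k (U ^ m : Submodule k R) ≤ (n + 1).multichoose m)
    (hZ : ∀ m, Module.finrank k (Z ^ m : Submodule k R) ≤ e.multichoose m) (r : ℕ) :
    ∀ m, m + r = d → Module.finrank k (U ^ m * (U + Z) ^ r : Submodule k R) ≤
      (n + 1).multichoose d * ∑ i ∈ Finset.range (r + 1), e.multichoose i := by
  have hmono : ∀ m, m ≤ d → (n + 1).multichoose m ≤ (n + 1).multichoose d := by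
    intro m hm
    rw [Nat.multichoose_eq, Nat.multichoose_eq, show n + 1 + m - 1 = n + m by omega,
      show n + 1 + d - 1 = n + d by omega, ← Nat.choose_symm_add, ← Nat.choose_symm_add]
    exact Nat.choose_le_choose _ (by omega)
  have : FiniteDimensional k (U + Z : Submodule k R) :=
    inferInstanceAs (FiniteDimensional k (U ⊔ Z : Submodule k R))
  induction r with
  | zero =>
    intro m hm
    rw [pow_zero, mul_one]
    simpa using (hU m).trans (hmono m (by omega))
  | succ r ih =>
    intro m hm
    have := fd_pow U m
    have := fd_pow U (m + 1)
    have := fd_pow Z (r + 1)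
    have := fd_pow (U + Z) r
    have := fd_mul (U ^ m) (Z ^ (r + 1))
    have := fd_mul (U ^ (m + 1)) ((U + Z) ^ r)
    have hle : U ^ m * (U + Z) ^ (r + 1) ≤ U ^ (m + 1) * (U + Z) ^ r ⊔ U ^ m * Z ^ (r + 1) :=
      calc U ^ m * (U + Z) ^ (r + 1) ≤ U ^ m * (U * (U + Z) ^ r + Z ^ (r + 1)) := by
            gcongr; exact add_pow_le U Z r
        _ = U ^ (m + 1) * (U + Z) ^ r + U ^ m * Z ^ (r + 1) := by ring
    calc _ ≤ _ := Submodule.finrank_mono hle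
      _ ≤ _ := Submodule.finrank_add_le_finrank_add_finrank _ _
      _ ≤ (n + 1).multichoose d * ∑ i ∈ Finset.range (r + 1), e.multichoose i +
          (n + 1).multichoose d * e.multichoose (r + 1) :=
        add_le_add (ih (m + 1) (by omega)) ((finrank_mul_le _ _).trans
          (Nat.mul_le_mul ((hU m).trans (hmono m (by omega))) (hZ _)))
      _ = _ := by rw [Finset.sum_range_succ _ (r + 1), mul_add]

lemma homog_le {N : ℕ} (I : Ideal (MvPolynomial (Fin N) k)) (hI : Paper.IdealHomog k I) {m : ℕ}
    (y : Fin m → MvPolynomial (Fin N) k ⧸ I) (hy : ∀ i, y i ∈ Paper.quotComponent k I 1) (r : ℕ)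
    (h : Paper.quotComponent k I (r + 1) ≤ (Ideal.span (Set.range y)).restrictScalars k) :
    Paper.quotComponent k I (r + 1) ≤
      Submodule.span k (Set.range y) * Paper.quotComponent k I r := by
  intro x hx
  obtain ⟨c, hc⟩ := Ideal.mem_span_range_iff_exists_fun.mp (h hx)
  obtain ⟨f, hf, rfl⟩ := hx
  choose l hl hly using hy
  choose g hg using fun i => Ideal.Quotient.mk_surjective (c i)
  have hmem : f - ∑ i, l i * g i ∈ I := by
    rw [← Ideal.Quotient.eq_zero_iff_mem, map_sub, sub_eq_zero, map_sum]
    refine hc.symm.trans (Finset.sum_congr rfl fun i _ => ?_)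
    rw [map_mul, hg, ← hly i, mul_comm]
    rfl
  have h2 := hI _ hmem (r + 1)
  rw [map_sub, map_sum, homogeneousComponent_of_mem hf, if_pos rfl] at h2
  rw [← Ideal.Quotient.eq_zero_iff_mem, map_sub, sub_eq_zero, map_sum] at h2
  change Ideal.Quotient.mk I f ∈ _
  rw [h2]
  refine Submodule.sum_mem _ fun i _ => ?_
  rw [hc_mul _ _ (hl i), map_mul]
  refine Submodule.mul_mem_mul (Submodule.subset_span ⟨i, (hly i).symm⟩) ?_
  exact ⟨_, homogeneousComponent_mem _ _, rfl⟩

lemma pow_le_of {R : Type} [CommRing R] [Algebra k R] (V U : Submodule k R) (r : ℕ)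
    (h : V ^ (r + 1) ≤ U * V ^ r) (m : ℕ) : V ^ (m + r) ≤ U ^ m * V ^ r := by
  induction m with
  | zero => simp
  | succ m ih =>
    calc V ^ (m + 1 + r) = V * V ^ (m + r) := by ring
      _ ≤ V * (U ^ m * V ^ r) := by gcongr
      _ = U ^ m * V ^ (r + 1) := by ring
      _ ≤ U ^ m * (U * V ^ r) := by gcongr
      _ = _ := by ring

lemma finrank_qc_one {N : ℕ} (I : Ideal (MvPolynomial (Fin N) k)) (hnd : Paper.Nondegenerate k I) :
    Module.finrank k (Paper.quotComponent k I 1) = N := by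
  have hinj : Function.Injective ((Ideal.Quotient.mkₐ k I).toLinearMap.domRestrict
      (homogeneousSubmodule (Fin N) k 1)) := by
    rw [injective_iff_map_eq_zero]
    intro a ha
    exact Subtype.ext (hnd a.1 (Ideal.Quotient.eq_zero_iff_mem.mp ha) a.2)
  have := LinearMap.finrank_range_of_inj hinj
  rw [LinearMap.range_domRestrict, finrank_homog, Nat.multichoose_one_right] at this
  exact this

lemma exists_split {R : Type} [AddCommGroup R] [Module k R] (V : Submodule k R)
    [FiniteDimensional k V] (n e : ℕ) (hV : Module.finrank k V = n + e + 1)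
    (L : Finset R) (hL : (L : Set R) ⊆ V) (hc : L.card = n + 1) :
    ∃ (y : Fin (n + 1) → R) (z : Fin e → R), (∀ i, y i ∈ V) ∧ (L : Set R) ⊆ Submodule.span k (Set.range y) ∧
      V = Submodule.span k (Set.range y) ⊔ Submodule.span k (Set.range z) := by
  classical
  obtain ⟨b, hbL, hbs, hb⟩ := exists_linearIndependent k (L : Set R)
  obtain ⟨B, hBV, hbB, hVB, hB⟩ := exists_linearIndepOn_id_extension (K := k) (s := b) (t := (V : Set R))
    hb (hbL.trans hL)
  have hspan : Submodule.span k B = V := le_antisymm (Submodule.span_le.mpr hBV) hVB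
  have hBf : B.Finite := by
    have : FiniteDimensional k (Submodule.span k B) := by rw [hspan]; infer_instance
    have hB' : LinearIndependent k (fun i : B => (⟨i, Submodule.subset_span i.2⟩ : Submodule.span k B)) :=
      LinearIndependent.of_comp (Submodule.span k B).subtype hB
    exact Set.finite_coe_iff.mp hB'.finite
  lift B to Finset R using hBf
  have hBc : B.card = n + e + 1 := by
    rw [← finrank_span_finset_eq_card hB, hspan, hV]
  lift b to Finset R using L.finite_toSet.subset hbL
  obtain ⟨T, hbT, hTB, hTc⟩ := Finset.exists_subsuperset_card_eq (n := n + 1)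
    (Finset.coe_subset.mp hbB) (hc ▸ Finset.card_le_card (Finset.coe_subset.mp hbL)) (by omega)
  have hZc : (B \ T).card = e := by
    rw [Finset.card_sdiff_of_subset hTB]; omega
  let y : Fin (n + 1) → R := fun i => ((T.equivFinOfCardEq hTc).symm i : R)
  let z : Fin e → R := fun i => (((B \ T).equivFinOfCardEq hZc).symm i : R)
  have hyr : Set.range y = T := by
    have := (T.equivFinOfCardEq hTc).symm.surjective.range_comp (fun x : T => (x : R))
    exact this.trans (by simp)
  have hzr : Set.range z = ((B \ T : Finset R) : Set R) := by
    have := ((B \ T).equivFinOfCardEq hZc).symm.surjective.range_comp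
      (fun x : (B \ T : Finset R) => (x : R))
    exact this.trans (by ext; simp)
  refine ⟨y, z, fun i => hBV (hTB ((T.equivFinOfCardEq hTc).symm i).2), ?_, ?_⟩
  · rw [hyr]
    refine (Submodule.subset_span (R := k) (s := (L : Set R))).trans ?_
    rw [← hbs]
    exact Submodule.span_mono (Finset.coe_subset.mpr hbT)
  · rw [hyr, hzr, ← Submodule.span_union, ← Finset.coe_union, Finset.union_sdiff_of_subset hTB, hspan]

lemma main_bound {n e D r : ℕ} (I : Ideal (MvPolynomial (Fin (n + e + 1)) k))
    (hI : Paper.IdealHomog k I) (hnd : Paper.Nondegenerate k I) (hD : Paper.HasDeg k I n D)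
    (L : Finset (MvPolynomial (Fin (n + e + 1)) k ⧸ I))
    (hL : (L : Set (MvPolynomial (Fin (n + e + 1)) k ⧸ I)) ⊆ Paper.quotComponent k I 1)
    (hc : L.card = n + 1)
    (h : Paper.quotComponent k I (r + 1) ≤
      (Ideal.span (L : Set (MvPolynomial (Fin (n + e + 1)) k ⧸ I))).restrictScalars k) :
    D ≤ (e + r).choose r := by
  have := qc_fd I 1
  obtain ⟨y, z, hy, hLy, hV⟩ := exists_split (Paper.quotComponent k I 1) n e
    (finrank_qc_one I hnd) L hL hc
  have h1 : Paper.quotComponent k I (r + 1) ≤ (Ideal.span (Set.range y)).restrictScalars k := by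
    refine h.trans ?_
    intro x hx
    have hle : Ideal.span (L : Set (MvPolynomial (Fin (n + e + 1)) k ⧸ I)) ≤
        Ideal.span (Set.range y) := by
      rw [Ideal.span_le]
      intro w hw
      exact Submodule.span_le_restrictScalars k (MvPolynomial (Fin (n + e + 1)) k ⧸ I)
        (Set.range y) (hLy hw)
    exact hle hx
  have h2 := homog_le I hI y hy r h1
  rw [qc_pow I (r + 1), qc_pow I r] at h2
  set U := Submodule.span k (Set.range y)
  set Z := Submodule.span k (Set.range z)
  have : FiniteDimensional k U := FiniteDimensional.span_of_finite k (Set.finite_range y)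
  have : FiniteDimensional k Z := FiniteDimensional.span_of_finite k (Set.finite_range z)
  have hb : ∀ d, r ≤ d → Paper.hilbFn k I d ≤ (e + r).choose r * (n + 1).multichoose d := by
    intro d hd
    obtain ⟨m, rfl⟩ := Nat.exists_eq_add_of_le' hd
    have := qc_fd I r
    have := fd_pow U m
    have := fd_mul (U ^ m) (Paper.quotComponent k I r)
    rw [qc_pow I r] at this
    have h3 := Submodule.finrank_mono (pow_le_of _ U r h2 m)
    rw [← qc_pow I (m + r)] at h3
    rw [hV] at h3
    refine h3.trans ((finrank_bound U Z n e (m + r) (finrank_span_pow_le y)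
      (finrank_span_pow_le z) r m rfl).trans ?_)
    rw [Nat.sum_range_multichoose, mul_comm, add_comm r e, Nat.choose_symm_add]
  obtain ⟨P, hPn, hPD, hP⟩ := hD
  have := numeric2 P n ((e + r).choose r) hPn (by
    filter_upwards [hP, Filter.eventually_ge_atTop r] with d hd hdr
    rw [← hd]
    exact_mod_cast hb d hdr)
  rw [← hPD] at this
  exact_mod_cast this

end
end Aux

/-- Theorem 1.1 (inequality): a non-degenerate closed subscheme `X ⊆ ℙ^{n+e}` of
dimension `n`, codimension `e` and reduction number `r` satisfies
`deg(X) ≤ C(e + r, r)`. -/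
theorem stmt11 (k : Type) [Field k] [IsAlgClosed k] (n e D : ℕ) (he : 0 < e)
    (I : Ideal (MvPolynomial (Fin (n + e + 1)) k))
    (hIhom : Paper.IdealHomog k I) (hsat : Paper.IsSaturatedIdeal k I)
    (hnd : Paper.Nondegenerate k I) (hproper : I ≠ ⊤)
    (hdim : ringKrullDim (MvPolynomial (Fin (n + e + 1)) k ⧸ I) = n + 1)
    (hD : Paper.HasDeg k I n D) :
    D ≤ (e + Paper.redNumAll k I (n + 1)).choose (Paper.redNumAll k I (n + 1)) := by
  have hinf : Infinite k := IsAlgClosed.instInfinite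
  obtain ⟨-, L, hL, hc, h⟩ := Nat.sInf_mem (Aux.set_nonempty n e D I hnd hD)
  exact Aux.main_bound I hIhom hnd hD L hL hc h
end
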